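/- arXiv:1503.02862 — 2 statements merged into one kernel-verified Lean document; each statement's English description precedes it below -/
import Mathlib

section
/- With U the Poisson extension of w(x) = (1 + |x|²)^{−(n−2γ)/2} as defined in the context, one has ∫_{ℝ^{n+1}_+} y^{a+4}·(∂_y U)² dx dy = ((a+5)(a+3)/5)·∫_{ℝ^{n+1}_+} y^{a+2}·U² dx dy. -/
/-! The Poisson kernel is, up to the factor `y ^ (2 * γ)`, a power of `|x - ξ|² + y²`, and `∂_y`
only changes the powers that occur. Combining two such powers by a Feynman parameter and completing
the square in `x` shows that a product of two kernels, weighted by the scale-invariant power of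
`y`, integrates over the half-space to a multiple of the Riesz kernel
`|ξ₁ - ξ₂| ^ (4 - n - 2 * γ)`. Hence both sides of the identity are multiples of the same Riesz
energy of `w`, and the ratio of the constants is given by the functional equation of the Gamma
function. The condition `n > 4 + 2 * γ` is exactly what makes the energy of the bubble finite; away
from the diagonal this is weighted AM-GM, which bounds a product of three slowly decaying factors
by products of two. -/

open MeasureTheory Real Module
open scoped ENNReal

section GammaIntegrals

lemma lintegral_ofReal_const_mul {α : Type*} [MeasurableSpace α] (μ : Measure α) {c : ℝ}
    (hc : 0 ≤ c) (f : α → ℝ) :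
    ∫⁻ x, ENNReal.ofReal (c * f x) ∂μ = ENNReal.ofReal c * ∫⁻ x, ENNReal.ofReal (f x) ∂μ := by
  simp only [ENNReal.ofReal_mul hc]
  exact lintegral_const_mul' _ _ ENNReal.ofReal_ne_top

lemma lintegral_rpow_mul_exp_neg_mul_rpow {r c p : ℝ} (hr : -1 < r) (hc : 0 < c) (hp : 0 < p) :
    ∫⁻ t in Set.Ioi (0 : ℝ), ENNReal.ofReal (t ^ r * exp (-c * t ^ p)) =
      ENNReal.ofReal (c ^ (-(r + 1) / p) * (1 / p) * Gamma ((r + 1) / p)) := by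
  rw [← integral_rpow_mul_exp_neg_mul_rpow hp hr hc, ofReal_integral_eq_lintegral_ofReal
    (integrableOn_rpow_mul_exp_neg_mul_rpow hr hp hc)]
  filter_upwards [ae_restrict_mem measurableSet_Ioi] with t (ht : 0 < t)
  positivity

lemma lintegral_rpow_mul_exp_neg_mul {s c : ℝ} (hs : 0 < s) (hc : 0 < c) :
    ∫⁻ t in Set.Ioi (0 : ℝ), ENNReal.ofReal (t ^ (s - 1) * exp (-(c * t))) =
      ENNReal.ofReal (Gamma s * c ^ (-s)) := by
  simpa [mul_comm] using lintegral_rpow_mul_exp_neg_mul_rpow (r := s - 1) (by linarith) hc one_pos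

lemma lintegral_rpow_mul_exp_neg_mul_sq {r c : ℝ} (hr : -1 < r) (hc : 0 < c) :
    ∫⁻ t in Set.Ioi (0 : ℝ), ENNReal.ofReal (t ^ r * exp (-(c * t ^ 2))) =
      ENNReal.ofReal (Gamma ((r + 1) / 2) / 2 * c ^ (-((r + 1) / 2))) := by
  have h := lintegral_rpow_mul_exp_neg_mul_rpow hr hc two_pos
  simp only [rpow_two, neg_mul] at h
  rw [h, neg_div]
  congr 1
  ring

lemma ofReal_mul_rpow_neg_eq_lintegral {k s c : ℝ} (hk : 0 ≤ k) (hs : 0 < s) (hc : 0 < c) :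
    ENNReal.ofReal (k * c ^ (-s)) =
      ∫⁻ t in Set.Ioi (0 : ℝ), ENNReal.ofReal (k / Gamma s * (t ^ (s - 1) * exp (-(c * t)))) := by
  rw [lintegral_ofReal_const_mul _ (by positivity), lintegral_rpow_mul_exp_neg_mul hs hc,
    ← ENNReal.ofReal_mul (by positivity)]
  congr 1
  field_simp

-- The Feynman parametrization of `A ^ (-p) * B ^ (-q)`; for `A = B = 1` it is Euler's Beta
-- integral.
lemma lintegral_rpow_mul_add_mul_rpow_neg {p q A B : ℝ} (hp : 0 < p) (hq : 0 < q)
    (hA : 0 < A) (hB : 0 < B) :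
    ∫⁻ v in Set.Ioi (0 : ℝ), ENNReal.ofReal (v ^ (q - 1) * (A + v * B) ^ (-(p + q))) =
      ENNReal.ofReal (Gamma p * Gamma q / Gamma (p + q) * (A ^ (-p) * B ^ (-q))) := by
  have schwinger : ∀ v ∈ Set.Ioi (0 : ℝ),
      ENNReal.ofReal (v ^ (q - 1) * (A + v * B) ^ (-(p + q))) =
        ∫⁻ s in Set.Ioi (0 : ℝ), ENNReal.ofReal
          (v ^ (q - 1) / Gamma (p + q) * (s ^ (p + q - 1) * exp (-((A + v * B) * s)))) := by
    intro v (hv : 0 < v)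
    exact ofReal_mul_rpow_neg_eq_lintegral (by positivity) (by positivity) (by positivity)
  have integrate_v : ∀ s ∈ Set.Ioi (0 : ℝ),
      ∫⁻ v in Set.Ioi (0 : ℝ), ENNReal.ofReal
          (v ^ (q - 1) / Gamma (p + q) * (s ^ (p + q - 1) * exp (-((A + v * B) * s)))) =
        ENNReal.ofReal
          (Gamma q / Gamma (p + q) * B ^ (-q) * (s ^ (p - 1) * exp (-(A * s)))) := by
    intro s (hs : 0 < s)
    have split (v : ℝ) : v ^ (q - 1) / Gamma (p + q) * (s ^ (p + q - 1) * exp (-((A + v * B) * s)))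
        = s ^ (p + q - 1) * exp (-(A * s)) / Gamma (p + q) *
          (v ^ (q - 1) * exp (-(B * s * v))) := by
      rw [show -((A + v * B) * s) = -(A * s) + -(B * s * v) by ring, exp_add]
      ring
    simp only [split]
    rw [lintegral_ofReal_const_mul _ (by positivity),
      lintegral_rpow_mul_exp_neg_mul hq (by positivity), ← ENNReal.ofReal_mul (by positivity),
      mul_rpow hB.le hs.le, show p - 1 = p + q - 1 + -q by ring, rpow_add hs]
    congr 1
    ring
  rw [setLIntegral_congr_fun measurableSet_Ioi schwinger, lintegral_lintegral_swap (by fun_prop),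
    setLIntegral_congr_fun measurableSet_Ioi integrate_v,
    lintegral_ofReal_const_mul _ (by positivity), lintegral_rpow_mul_exp_neg_mul hp hA,
    ← ENNReal.ofReal_mul (by positivity)]
  congr 1
  ring

lemma ofReal_mul_rpow_neg_mul_rpow_neg_eq_lintegral {k p q A B : ℝ} (hk : 0 ≤ k) (hp : 0 < p)
    (hq : 0 < q) (hA : 0 < A) (hB : 0 < B) :
    ENNReal.ofReal (k * (A ^ (-p) * B ^ (-q))) = ∫⁻ v in Set.Ioi (0 : ℝ), ENNReal.ofReal
      (Gamma (p + q) / (Gamma p * Gamma q) * k * (v ^ (q - 1) * (A + v * B) ^ (-(p + q)))) := by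
  rw [lintegral_ofReal_const_mul _ (by positivity), lintegral_rpow_mul_add_mul_rpow_neg hp hq hA hB,
    ← ENNReal.ofReal_mul (by positivity)]
  congr 1
  field_simp

end GammaIntegrals

section KernelConstant

/-- The constant `K` in the composition formula
`∫ y ^ (2 * m - 1 - d) * (|x - ξ₁|² + y²) ^ (-p) * (|x - ξ₂|² + y²) ^ (-q) =
K * |ξ₁ - ξ₂| ^ (2 * (m - p - q))`
for the integral over `{(y, x) : y > 0}` above a `d`-dimensional space. -/
noncomputable def kernelConstant (d m p q : ℝ) : ℝ :=
  Gamma (m - d / 2) / 2 * π ^ (d / 2) * Gamma (p + q - m) * Gamma (m - p) * Gamma (m - q) /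
    (Gamma p * Gamma q * Gamma (2 * m - p - q))

lemma kernelConstant_pos {d m p q : ℝ} (hm : d < 2 * m) (hp : p < m) (hq : q < m)
    (hpq : m < p + q) : 0 < kernelConstant d m p q := by
  have : 0 < Gamma (m - d / 2) := Gamma_pos_of_pos (by linarith)
  have : 0 < Gamma (p + q - m) := Gamma_pos_of_pos (by linarith)
  have : 0 < Gamma (m - p) := Gamma_pos_of_pos (by linarith)
  have : 0 < Gamma (m - q) := Gamma_pos_of_pos (by linarith)
  have : 0 < Gamma p := Gamma_pos_of_pos (by linarith)
  have : 0 < Gamma q := Gamma_pos_of_pos (by linarith)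
  have : 0 < Gamma (2 * m - p - q) := Gamma_pos_of_pos (by linarith)
  unfold kernelConstant
  positivity

lemma kernelConstant_comm (d m p q : ℝ) : kernelConstant d m p q = kernelConstant d m q p := by
  rw [kernelConstant, kernelConstant, add_comm p q, sub_right_comm (2 * m) p q]
  ring

lemma kernelConstant_add_one_add_one {d m p q : ℝ} (hm : m - d / 2 ≠ 0) (hp : p ≠ 0)
    (hq : m - q ≠ 0) (hpq : 2 * m - p - q ≠ 0) :
    kernelConstant d (m + 1) (p + 1) q =
      (m - d / 2) * (m - q) / (p * (2 * m - p - q)) * kernelConstant d m p q := by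
  rw [kernelConstant, kernelConstant, show m + 1 - d / 2 = m - d / 2 + 1 by ring,
    show m + 1 - q = m - q + 1 by ring, show 2 * (m + 1) - (p + 1) - q = 2 * m - p - q + 1 by ring,
    show p + 1 + q - (m + 1) = p + q - m by ring, add_sub_add_right_eq_sub, Gamma_add_one hm,
    Gamma_add_one hp, Gamma_add_one hq, Gamma_add_one hpq, div_mul_div_comm]
  congr 1 <;> ring

lemma kernelConstant_quadratic_combination {d γ s : ℝ} (hγ : -2 < γ) (hs : 0 < s)
    (hd : d + 2 * γ = 2 * s) :
    4 * γ ^ 2 * kernelConstant d (s + 2) s s - 8 * γ * s * kernelConstant d (s + 3) (s + 1) s +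
      4 * s ^ 2 * kernelConstant d (s + 4) (s + 1) (s + 1) =
        (6 - 2 * γ) * (4 - 2 * γ) / 5 * kernelConstant d (s + 2) s s := by
  have h₁₀ : kernelConstant d (s + 3) (s + 1) s =
      (γ + 2) / (2 * s) * kernelConstant d (s + 2) s s := by
    rw [show s + 3 = s + 2 + 1 by ring, kernelConstant_add_one_add_one (by linarith) hs.ne'
      (by linarith) (by linarith), show s + 2 - d / 2 = γ + 2 by linarith]
    congr 1
    ring
  have h₁₁ : kernelConstant d (s + 4) (s + 1) (s + 1) =
      2 * (γ + 3) / (5 * s) * kernelConstant d (s + 3) (s + 1) s := by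
    rw [kernelConstant_comm d (s + 3), show s + 4 = s + 3 + 1 by ring,
      kernelConstant_add_one_add_one (by linarith) hs.ne' (by linarith) (by linarith),
      show s + 3 - d / 2 = γ + 3 by linarith]
    congr 1
    ring
  rw [h₁₁, h₁₀]
  field_simp
  ring

end KernelConstant

lemma sq_norm_sub_add_mul_sq_norm_sub {E : Type*} [NormedAddCommGroup E] [InnerProductSpace ℝ E]
    {v : ℝ} (hv : 1 + v ≠ 0) (x ξ₁ ξ₂ : E) :
    ‖x - ξ₁‖ ^ 2 + v * ‖x - ξ₂‖ ^ 2 =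
      (1 + v) * ‖x - (1 + v)⁻¹ • (ξ₁ + v • ξ₂)‖ ^ 2 + v / (1 + v) * ‖ξ₁ - ξ₂‖ ^ 2 := by
  obtain ⟨a, rfl⟩ : ∃ a, ξ₁ = x - a := ⟨x - ξ₁, by abel⟩
  obtain ⟨b, rfl⟩ : ∃ b, ξ₂ = x - b := ⟨x - ξ₂, by abel⟩
  have hc : x - (1 + v)⁻¹ • (x - a + v • (x - b)) = (1 + v)⁻¹ • (a + v • b) := by
    rw [eq_inv_smul_iff₀ hv, smul_sub, smul_inv_smul₀ hv]
    module
  rw [hc, norm_smul, mul_pow, norm_eq_abs, sq_abs, sub_sub_cancel, sub_sub_cancel,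
    sub_sub_sub_cancel_left, norm_add_sq_real, norm_sub_sq_real, norm_smul, mul_pow, norm_eq_abs,
    sq_abs, inner_smul_right, real_inner_comm]
  field_simp
  ring

lemma ae_prod_fst_ne_snd {α : Type*} [MeasurableSpace α] [MeasurableEq α] (μ ν : Measure α)
    [SFinite ν] [NullSingletonClass ν] : ∀ᵐ z ∂μ.prod ν, z.1 ≠ z.2 := by
  have hdiag : MeasurableSet {z : α × α | z.1 = z.2} :=
    measurableSet_eq_fun measurable_fst measurable_snd
  simp [ae_iff, Measure.measure_prod_null hdiag, Filter.EventuallyEq]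

section KernelComposition

variable {E : Type*} [NormedAddCommGroup E] [InnerProductSpace ℝ E] [FiniteDimensional ℝ E]
  [MeasurableSpace E] [BorelSpace E]

variable (E) in
/-- Lebesgue measure on the half-space `(0, ∞) × E`, the height `y > 0` being the first
coordinate. -/
noncomputable abbrev halfSpaceMeasure : Measure (ℝ × E) :=
  (volume.restrict (Set.Ioi (0 : ℝ))).prod volume

lemma ae_halfSpaceMeasure_pos : ∀ᵐ z ∂halfSpaceMeasure E, 0 < z.1 :=
  Measure.quasiMeasurePreserving_fst.ae (ae_restrict_mem measurableSet_Ioi)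

lemma lintegral_exp_neg_mul_sq_norm {b : ℝ} (hb : 0 < b) :
    ∫⁻ x : E, ENNReal.ofReal (exp (-(b * ‖x‖ ^ 2))) =
      ENNReal.ofReal ((π / b) ^ ((finrank ℝ E : ℝ) / 2)) := by
  have h := GaussianFourier.integral_rexp_neg_mul_sq_norm (V := E) hb
  have hint : Integrable fun x : E ↦ exp (-b * ‖x‖ ^ 2) :=
    .of_integral_ne_zero (by rw [h]; positivity)
  rw [← h, ofReal_integral_eq_lintegral_ofReal hint (.of_forall fun _ ↦ (exp_pos _).le)]
  simp only [neg_mul]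

lemma lintegral_rpow_mul_exp_neg_mul_sq_norm_add_sq {r b : ℝ} (hr : -1 < r) (hb : 0 < b) (c : E) :
    ∫⁻ z, ENNReal.ofReal (z.1 ^ r * exp (-(b * (‖z.2 - c‖ ^ 2 + z.1 ^ 2)))) ∂halfSpaceMeasure E =
      ENNReal.ofReal (Gamma ((r + 1) / 2) / 2 * π ^ ((finrank ℝ E : ℝ) / 2) *
        b ^ (-((r + 1 + finrank ℝ E) / 2))) := by
  have : 0 < Gamma ((r + 1) / 2) := Gamma_pos_of_pos (by linarith)
  calc ∫⁻ z, ENNReal.ofReal (z.1 ^ r * exp (-(b * (‖z.2 - c‖ ^ 2 + z.1 ^ 2)))) ∂halfSpaceMeasure E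
      = ∫⁻ z, ENNReal.ofReal (z.1 ^ r * exp (-(b * z.1 ^ 2))) *
          ENNReal.ofReal (exp (-(b * ‖z.2 - c‖ ^ 2))) ∂halfSpaceMeasure E := by
        congr with z
        rw [← ENNReal.ofReal_mul' (exp_pos _).le, mul_assoc, ← exp_add]
        ring_nf
    _ = ENNReal.ofReal (Gamma ((r + 1) / 2) / 2 * b ^ (-((r + 1) / 2))) *
          ENNReal.ofReal ((π / b) ^ ((finrank ℝ E : ℝ) / 2)) := by
        rw [lintegral_prod_mul (f := fun y : ℝ ↦ ENNReal.ofReal (y ^ r * exp (-(b * y ^ 2))))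
            (g := fun x : E ↦ ENNReal.ofReal (exp (-(b * ‖x - c‖ ^ 2)))) (by fun_prop)
            (by fun_prop),
          lintegral_rpow_mul_exp_neg_mul_sq hr hb,
          lintegral_sub_right_eq_self (fun x : E ↦ ENNReal.ofReal (exp (-(b * ‖x‖ ^ 2)))),
          lintegral_exp_neg_mul_sq_norm hb]
    _ = _ := by
        rw [← ENNReal.ofReal_mul (by positivity), div_rpow pi_pos.le hb.le,
          show -((r + 1 + finrank ℝ E) / 2) = -((r + 1) / 2) + -((finrank ℝ E : ℝ) / 2) by ring,
          rpow_add hb, rpow_neg hb.le ((finrank ℝ E : ℝ) / 2)]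
        congr 1
        ring

lemma lintegral_rpow_mul_exp_neg_quadratic_mul {r α u : ℝ} (hr : -1 < r) (hα : 0 < α) (hu : 0 < u)
    (β : ℝ) (c : E) :
    ∫⁻ x, ENNReal.ofReal (x.1 ^ r * exp (-((α * (‖x.2 - c‖ ^ 2 + x.1 ^ 2) + β) * u)))
        ∂halfSpaceMeasure E =
      ENNReal.ofReal (Gamma ((r + 1) / 2) / 2 * π ^ ((finrank ℝ E : ℝ) / 2) *
        (α * u) ^ (-((r + 1 + finrank ℝ E) / 2)) * exp (-(β * u))) := by
  have split (x : ℝ × E) : x.1 ^ r * exp (-((α * (‖x.2 - c‖ ^ 2 + x.1 ^ 2) + β) * u)) =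
      exp (-(β * u)) * (x.1 ^ r * exp (-(α * u * (‖x.2 - c‖ ^ 2 + x.1 ^ 2)))) := by
    rw [show -((α * (‖x.2 - c‖ ^ 2 + x.1 ^ 2) + β) * u) =
      -(β * u) + -(α * u * (‖x.2 - c‖ ^ 2 + x.1 ^ 2)) by ring, exp_add]
    ring
  simp only [split]
  rw [lintegral_ofReal_const_mul _ (exp_pos _).le,
    lintegral_rpow_mul_exp_neg_mul_sq_norm_add_sq hr (by positivity),
    ← ENNReal.ofReal_mul (exp_pos _).le, mul_comm (exp _)]

lemma lintegral_rpow_mul_quadratic_rpow_neg {m z α β : ℝ} (hm : finrank ℝ E < 2 * m)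
    (hz : m < z) (hα : 0 < α) (hβ : 0 < β) (c : E) :
    ∫⁻ x, ENNReal.ofReal (x.1 ^ (2 * m - 1 - finrank ℝ E) *
        (α * (‖x.2 - c‖ ^ 2 + x.1 ^ 2) + β) ^ (-z)) ∂halfSpaceMeasure E =
      ENNReal.ofReal (Gamma (m - finrank ℝ E / 2) / 2 * π ^ ((finrank ℝ E : ℝ) / 2) *
        Gamma (z - m) / Gamma z * (α ^ (-m) * β ^ (-(z - m)))) := by
  have hm0 : 0 < m := by linarith [(finrank ℝ E).cast_nonneg (α := ℝ)]
  have : 0 < Gamma z := Gamma_pos_of_pos (hm0.trans hz)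
  have : 0 < Gamma (m - finrank ℝ E / 2) := Gamma_pos_of_pos (by linarith)
  have schwinger : ∀ᵐ x ∂halfSpaceMeasure E,
      ENNReal.ofReal (x.1 ^ (2 * m - 1 - finrank ℝ E) *
          (α * (‖x.2 - c‖ ^ 2 + x.1 ^ 2) + β) ^ (-z)) =
        ∫⁻ u in Set.Ioi (0 : ℝ), ENNReal.ofReal
          (x.1 ^ (2 * m - 1 - finrank ℝ E) / Gamma z *
            (u ^ (z - 1) * exp (-((α * (‖x.2 - c‖ ^ 2 + x.1 ^ 2) + β) * u)))) := by
    filter_upwards [ae_halfSpaceMeasure_pos] with x hx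
    exact ofReal_mul_rpow_neg_eq_lintegral (by positivity) (hm0.trans hz) (by positivity)
  have integrate_x : ∀ u ∈ Set.Ioi (0 : ℝ),
      ∫⁻ x, ENNReal.ofReal (x.1 ^ (2 * m - 1 - finrank ℝ E) / Gamma z *
            (u ^ (z - 1) * exp (-((α * (‖x.2 - c‖ ^ 2 + x.1 ^ 2) + β) * u)))) ∂halfSpaceMeasure E =
        ENNReal.ofReal (Gamma (m - finrank ℝ E / 2) / 2 * π ^ ((finrank ℝ E : ℝ) / 2) / Gamma z *
          α ^ (-m) * (u ^ (z - m - 1) * exp (-(β * u)))) := by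
    intro u (hu : 0 < u)
    have factor (A B : ℝ) : A / Gamma z * (u ^ (z - 1) * B) = u ^ (z - 1) / Gamma z * (A * B) := by
      ring
    simp only [factor]
    rw [lintegral_ofReal_const_mul _ (by positivity),
      lintegral_rpow_mul_exp_neg_quadratic_mul (by linarith) hα hu,
      ← ENNReal.ofReal_mul (by positivity),
      show (2 * m - 1 - finrank ℝ E + 1) / 2 = m - (finrank ℝ E : ℝ) / 2 by ring,
      show -((2 * m - 1 - finrank ℝ E + 1 + finrank ℝ E) / 2) = -m by ring,
      mul_rpow hα.le hu.le, show z - m - 1 = z - 1 + -m by ring, rpow_add hu]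
    congr 1
    ring
  rw [lintegral_congr_ae schwinger, lintegral_lintegral_swap (by fun_prop),
    setLIntegral_congr_fun measurableSet_Ioi integrate_x,
    lintegral_ofReal_const_mul _ (by positivity),
    lintegral_rpow_mul_exp_neg_mul (by linarith) hβ, ← ENNReal.ofReal_mul (by positivity)]
  congr 1
  ring

lemma lintegral_rpow_mul_add_mul_quadratic_rpow_neg {m s v : ℝ} (hm : finrank ℝ E < 2 * m)
    (hs : m < s) (hv : 0 < v) {ξ₁ ξ₂ : E} (hξ : ξ₁ ≠ ξ₂) :
    ∫⁻ z, ENNReal.ofReal (z.1 ^ (2 * m - 1 - finrank ℝ E) *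
        (‖z.2 - ξ₁‖ ^ 2 + z.1 ^ 2 + v * (‖z.2 - ξ₂‖ ^ 2 + z.1 ^ 2)) ^ (-s)) ∂halfSpaceMeasure E =
      ENNReal.ofReal (Gamma (m - finrank ℝ E / 2) / 2 * π ^ ((finrank ℝ E : ℝ) / 2) *
        Gamma (s - m) / Gamma s * ‖ξ₁ - ξ₂‖ ^ (2 * (m - s)) *
        (v ^ (m - s) * (1 + v) ^ (s - 2 * m))) := by
  have hD : 0 < ‖ξ₁ - ξ₂‖ := norm_pos_iff.2 (sub_ne_zero.2 hξ)
  have hv' : 0 < 1 + v := by positivity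
  have complete_square (z : ℝ × E) :
      ‖z.2 - ξ₁‖ ^ 2 + z.1 ^ 2 + v * (‖z.2 - ξ₂‖ ^ 2 + z.1 ^ 2) =
        (1 + v) * (‖z.2 - (1 + v)⁻¹ • (ξ₁ + v • ξ₂)‖ ^ 2 + z.1 ^ 2) +
          v / (1 + v) * ‖ξ₁ - ξ₂‖ ^ 2 := by
    linear_combination sq_norm_sub_add_mul_sq_norm_sub hv'.ne' z.2 ξ₁ ξ₂
  simp only [complete_square]
  rw [lintegral_rpow_mul_quadratic_rpow_neg hm hs hv' (by positivity), neg_sub,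
    mul_rpow (by positivity) (by positivity), div_rpow hv.le hv'.le, ← rpow_natCast,
    ← rpow_mul hD.le, Nat.cast_ofNat, show s - 2 * m = -m - (m - s) by ring,
    rpow_sub hv' (-m) (m - s)]
  congr 1
  ring

lemma lintegral_rpow_mul_kernel_mul_kernel_eq_lintegral {p q : ℝ} (hp : 0 < p) (hq : 0 < q)
    (r : ℝ) (ξ₁ ξ₂ : E) :
    ∫⁻ z, ENNReal.ofReal (z.1 ^ r *
        ((‖z.2 - ξ₁‖ ^ 2 + z.1 ^ 2) ^ (-p) * (‖z.2 - ξ₂‖ ^ 2 + z.1 ^ 2) ^ (-q)))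
        ∂halfSpaceMeasure E =
      ∫⁻ v in Set.Ioi (0 : ℝ), ENNReal.ofReal (Gamma (p + q) / (Gamma p * Gamma q) * v ^ (q - 1)) *
        ∫⁻ z, ENNReal.ofReal (z.1 ^ r *
          (‖z.2 - ξ₁‖ ^ 2 + z.1 ^ 2 + v * (‖z.2 - ξ₂‖ ^ 2 + z.1 ^ 2)) ^ (-(p + q)))
          ∂halfSpaceMeasure E := by
  have feynman : ∀ᵐ z ∂halfSpaceMeasure E,
      ENNReal.ofReal (z.1 ^ r *
        ((‖z.2 - ξ₁‖ ^ 2 + z.1 ^ 2) ^ (-p) * (‖z.2 - ξ₂‖ ^ 2 + z.1 ^ 2) ^ (-q))) =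
      ∫⁻ v in Set.Ioi (0 : ℝ), ENNReal.ofReal (
        Gamma (p + q) / (Gamma p * Gamma q) * z.1 ^ r * (v ^ (q - 1) *
        (‖z.2 - ξ₁‖ ^ 2 + z.1 ^ 2 + v * (‖z.2 - ξ₂‖ ^ 2 + z.1 ^ 2)) ^ (-(p + q)))) := by
    filter_upwards [ae_halfSpaceMeasure_pos] with z hz
    exact ofReal_mul_rpow_neg_mul_rpow_neg_eq_lintegral (by positivity) hp hq (by positivity)
      (by positivity)
  rw [lintegral_congr_ae feynman, lintegral_lintegral_swap (by fun_prop)]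
  refine setLIntegral_congr_fun measurableSet_Ioi fun v (hv : 0 < v) ↦ ?_
  rw [← lintegral_ofReal_const_mul _ (by positivity)]
  simp only [mul_mul_mul_comm]

lemma lintegral_rpow_mul_kernel_mul_kernel {m p q : ℝ} (hm : finrank ℝ E < 2 * m)
    (hp : p < m) (hq : q < m) (hpq : m < p + q) {ξ₁ ξ₂ : E} (hξ : ξ₁ ≠ ξ₂) :
    ∫⁻ z, ENNReal.ofReal (z.1 ^ (2 * m - 1 - finrank ℝ E) *
        ((‖z.2 - ξ₁‖ ^ 2 + z.1 ^ 2) ^ (-p) * (‖z.2 - ξ₂‖ ^ 2 + z.1 ^ 2) ^ (-q)))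
        ∂halfSpaceMeasure E =
      ENNReal.ofReal (kernelConstant (finrank ℝ E) m p q * ‖ξ₁ - ξ₂‖ ^ (2 * (m - p - q))) := by
  have hp0 : 0 < p := by linarith
  have hq0 : 0 < q := by linarith
  have : 0 < Gamma (m - finrank ℝ E / 2) := Gamma_pos_of_pos (by linarith)
  have : 0 < Gamma (p + q - m) := Gamma_pos_of_pos (by linarith)
  have integrate_z : ∀ v ∈ Set.Ioi (0 : ℝ),
      ENNReal.ofReal (Gamma (p + q) / (Gamma p * Gamma q) * v ^ (q - 1)) *
        ∫⁻ z, ENNReal.ofReal (z.1 ^ (2 * m - 1 - finrank ℝ E) *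
          (‖z.2 - ξ₁‖ ^ 2 + z.1 ^ 2 + v * (‖z.2 - ξ₂‖ ^ 2 + z.1 ^ 2)) ^ (-(p + q)))
          ∂halfSpaceMeasure E =
      ENNReal.ofReal (Gamma (p + q) / (Gamma p * Gamma q) *
        (Gamma (m - finrank ℝ E / 2) / 2 * π ^ ((finrank ℝ E : ℝ) / 2) *
          Gamma (p + q - m) / Gamma (p + q) * ‖ξ₁ - ξ₂‖ ^ (2 * (m - (p + q)))) *
          (v ^ (m - p - 1) * (1 + v * 1) ^ (-(m - q + (m - p))))) := by
    intro v (hv : 0 < v)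
    rw [lintegral_rpow_mul_add_mul_quadratic_rpow_neg hm hpq hv hξ,
      ← ENNReal.ofReal_mul (by positivity), mul_one,
      show m - p - 1 = (q - 1) + (m - (p + q)) by ring, rpow_add hv]
    ring_nf
  rw [lintegral_rpow_mul_kernel_mul_kernel_eq_lintegral hp0 hq0,
    setLIntegral_congr_fun measurableSet_Ioi integrate_z,
    lintegral_ofReal_const_mul _ (by positivity),
    lintegral_rpow_mul_add_mul_rpow_neg (by linarith) (by linarith) one_pos one_pos,
    ← ENNReal.ofReal_mul (by positivity), kernelConstant]
  congr 1
  rw [one_rpow, one_rpow, show m - q + (m - p) = 2 * m - p - q by ring, ← sub_sub]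
  field_simp

/-- The integral of `ξ ↦ (|x - ξ|² + y²) ^ (-p)` against the density `f`, as a function on the
half-space above `E`. -/
noncomputable def halfSpacePotential (p : ℝ) (f : E → ℝ) (x : E) (y : ℝ) : ℝ :=
  ∫ ξ, (‖x - ξ‖ ^ 2 + y ^ 2) ^ (-p) * f ξ

lemma mul_halfSpacePotential_mul_eq_integral (p q : ℝ) (f g : E → ℝ) (x : E)
    (y c : ℝ) :
    c * (halfSpacePotential p f x y * halfSpacePotential q g x y) =
      ∫ ξ : E × E, c *
      ((‖x - ξ.1‖ ^ 2 + y ^ 2) ^ (-p) * (‖x - ξ.2‖ ^ 2 + y ^ 2) ^ (-q)) *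
      (f ξ.1 * g ξ.2) := by
  rw [halfSpacePotential, halfSpacePotential, ← integral_prod_mul, ← integral_const_mul]
  congr with ξ
  ring

section
variable {m p q : ℝ} (hm : finrank ℝ E < 2 * m) (hp : p < m) (hq : q < m) (hpq : m < p + q)
include hm hp hq hpq

lemma integrable_rpow_mul_kernel_mul_kernel {ξ₁ ξ₂ : E} (hξ : ξ₁ ≠ ξ₂) :
    Integrable (fun z ↦ z.1 ^ (2 * m - 1 - finrank ℝ E) *
      ((‖z.2 - ξ₁‖ ^ 2 + z.1 ^ 2) ^ (-p) * (‖z.2 - ξ₂‖ ^ 2 + z.1 ^ 2) ^ (-q)))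
      (halfSpaceMeasure E) := by
  refine ⟨by fun_prop, ?_⟩
  rw [hasFiniteIntegral_iff_ofReal,
    lintegral_rpow_mul_kernel_mul_kernel hm hp hq hpq hξ]
  · exact ENNReal.ofReal_lt_top
  · filter_upwards [ae_halfSpaceMeasure_pos] with z hz
    positivity

lemma integral_rpow_mul_kernel_mul_kernel {ξ₁ ξ₂ : E} (hξ : ξ₁ ≠ ξ₂) :
    ∫ z, z.1 ^ (2 * m - 1 - finrank ℝ E) *
      ((‖z.2 - ξ₁‖ ^ 2 + z.1 ^ 2) ^ (-p) * (‖z.2 - ξ₂‖ ^ 2 + z.1 ^ 2) ^ (-q))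
        ∂halfSpaceMeasure E =
      kernelConstant (finrank ℝ E) m p q * ‖ξ₁ - ξ₂‖ ^ (2 * (m - p - q)) := by
  have := kernelConstant_pos hm hp hq hpq
  rw [integral_eq_lintegral_of_nonneg_ae _ (by fun_prop),
    lintegral_rpow_mul_kernel_mul_kernel hm hp hq hpq hξ, ENNReal.toReal_ofReal (by positivity)]
  filter_upwards [ae_halfSpaceMeasure_pos] with z hz
  positivity

variable [Nontrivial E] {f g : E → ℝ} (hf : AEStronglyMeasurable f) (hg : AEStronglyMeasurable g)
  (hfg : Integrable fun ξ : E × E ↦ ‖ξ.1 - ξ.2‖ ^ (2 * (m - p - q)) * (f ξ.1 * g ξ.2))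
include hf hg hfg

lemma integrable_rpow_mul_kernel_mul_kernel_mul :
    Integrable (fun t : (E × E) × (ℝ × E) ↦ t.2.1 ^ (2 * m - 1 - finrank ℝ E) *
      ((‖t.2.2 - t.1.1‖ ^ 2 + t.2.1 ^ 2) ^ (-p) * (‖t.2.2 - t.1.2‖ ^ 2 + t.2.1 ^ 2) ^ (-q)) *
      (f t.1.1 * g t.1.2)) (volume.prod (halfSpaceMeasure E)) := by
  rw [integrable_prod_iff]
  · constructor
    · filter_upwards [ae_prod_fst_ne_snd volume volume] with ξ hξ
      exact (integrable_rpow_mul_kernel_mul_kernel hm hp hq hpq hξ).mul_const _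
    · refine (hfg.norm.const_mul (kernelConstant (finrank ℝ E) m p q)).congr ?_
      filter_upwards [ae_prod_fst_ne_snd volume volume] with ξ hξ
      rw [norm_mul, norm_of_nonneg (by positivity : 0 ≤ ‖ξ.1 - ξ.2‖ ^ (2 * (m - p - q))),
        ← mul_assoc, ← integral_rpow_mul_kernel_mul_kernel hm hp hq hpq hξ, ← integral_mul_const]
      refine integral_congr_ae ?_
      filter_upwards [ae_halfSpaceMeasure_pos] with z hz
      rw [norm_mul _ (f ξ.1 * g ξ.2)]
      congr 1
      exact (norm_of_nonneg (by positivity)).symm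
  · exact .mul (by fun_prop) (hf.comp_fst.mul hg.comp_snd).comp_fst

lemma integrable_rpow_mul_halfSpacePotential_mul_halfSpacePotential :
    Integrable (fun z ↦ z.1 ^ (2 * m - 1 - finrank ℝ E) *
      (halfSpacePotential p f z.2 z.1 * halfSpacePotential q g z.2 z.1)) (halfSpaceMeasure E) := by
  simp only [mul_halfSpacePotential_mul_eq_integral]
  exact (integrable_rpow_mul_kernel_mul_kernel_mul hm hp hq hpq hf hg hfg).integral_prod_right

lemma integral_rpow_mul_halfSpacePotential_mul_halfSpacePotential :
    ∫ z, z.1 ^ (2 * m - 1 - finrank ℝ E) *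
      (halfSpacePotential p f z.2 z.1 * halfSpacePotential q g z.2 z.1) ∂halfSpaceMeasure E =
    kernelConstant (finrank ℝ E) m p q *
      ∫ ξ : E × E, ‖ξ.1 - ξ.2‖ ^ (2 * (m - p - q)) * (f ξ.1 * g ξ.2) := by
  simp only [mul_halfSpacePotential_mul_eq_integral]
  rw [← integral_integral_swap (integrable_rpow_mul_kernel_mul_kernel_mul hm hp hq hpq hf hg hfg),
    ← integral_const_mul]
  refine integral_congr_ae ?_
  filter_upwards [ae_prod_fst_ne_snd volume volume] with ξ hξ
  rw [integral_mul_const, integral_rpow_mul_kernel_mul_kernel hm hp hq hpq hξ, mul_assoc]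

end
end KernelComposition

lemma one_add_sq_norm_le_mul_sq_norm_sub_add_sq {E : Type*} [SeminormedAddCommGroup E] (x ξ : E)
    {y : ℝ} (hy : y ≠ 0) :
    1 + ‖ξ‖ ^ 2 ≤ (2 + (1 + 2 * ‖x‖ ^ 2) / y ^ 2) * (‖x - ξ‖ ^ 2 + y ^ 2) := by
  have htri : ‖ξ‖ ^ 2 ≤ 2 * ‖x‖ ^ 2 + 2 * ‖x - ξ‖ ^ 2 := by
    have := norm_le_norm_add_norm_sub x ξ
    nlinarith [norm_nonneg ξ, sq_nonneg (‖x‖ - ‖x - ξ‖)]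
  calc 1 + ‖ξ‖ ^ 2 ≤ 2 * ‖x - ξ‖ ^ 2 + (1 + 2 * ‖x‖ ^ 2) / y ^ 2 * y ^ 2 := by
        rw [div_mul_cancel₀ _ (by positivity)]; linarith
    _ ≤ _ := by
        rw [add_mul, mul_add, mul_add]
        linarith [sq_nonneg y, show 0 ≤ (1 + 2 * ‖x‖ ^ 2) / y ^ 2 * ‖x - ξ‖ ^ 2 by positivity]

lemma mul_add_sq_rpow_neg_add_one_le {p A u v : ℝ} (hp : 0 ≤ p) (hA : 0 ≤ A) (hv : 0 < v)
    (hvu : v ≤ u) : u * (A + u ^ 2) ^ (-(p + 1)) ≤ v⁻¹ * (A + v ^ 2) ^ (-p) := by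
  have hu : 0 < u := hv.trans_le hvu
  have hu' : 0 < A + u ^ 2 := by positivity
  calc u * (A + u ^ 2) ^ (-(p + 1)) = u / (A + u ^ 2) * (A + u ^ 2) ^ (-p) := by
        rw [neg_add', rpow_sub_one hu'.ne']
        ring
    _ ≤ v⁻¹ * (A + v ^ 2) ^ (-p) := by
        gcongr ?_ * ?_
        · rw [div_le_iff₀ hu', inv_mul_eq_div, le_div_iff₀ hv]
          nlinarith
        · exact rpow_le_rpow_of_nonpos (by positivity) (by gcongr) (neg_nonpos.2 hp)

section PotentialDeriv

variable {E : Type*} [NormedAddCommGroup E] [InnerProductSpace ℝ E] [FiniteDimensional ℝ E]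
  [MeasurableSpace E] [BorelSpace E] {p : ℝ} {f : E → ℝ}

lemma aestronglyMeasurable_of_one_add_sq_norm_rpow_mul {s : ℝ}
    (hf : AEStronglyMeasurable fun ξ ↦ (1 + ‖ξ‖ ^ 2) ^ s * f ξ) : AEStronglyMeasurable f := by
  have hweight : AEStronglyMeasurable fun ξ : E ↦ (1 + ‖ξ‖ ^ 2) ^ (-s) :=
    Measurable.aestronglyMeasurable (by fun_prop)
  refine (hweight.mul hf).congr (.of_forall fun ξ ↦ ?_)
  simp only [Pi.mul_apply]
  rw [rpow_neg (by positivity), inv_mul_cancel_left₀ (by positivity)]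

lemma integrable_sq_norm_sub_add_sq_rpow_neg_mul (hp : 0 ≤ p)
    (hf : Integrable fun ξ ↦ (1 + ‖ξ‖ ^ 2) ^ (-p) * f ξ) (x : E) {y : ℝ} (hy : y ≠ 0) :
    Integrable fun ξ ↦ (‖x - ξ‖ ^ 2 + y ^ 2) ^ (-p) * f ξ := by
  let C := 2 + (1 + 2 * ‖x‖ ^ 2) / y ^ 2
  have hbound (ξ : E) : ‖((1 + ‖ξ‖ ^ 2) / (‖x - ξ‖ ^ 2 + y ^ 2)) ^ p‖ ≤ C ^ p := by
    rw [norm_of_nonneg (by positivity)]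
    gcongr
    exact (div_le_iff₀ (by positivity)).2 (one_add_sq_norm_le_mul_sq_norm_sub_add_sq x ξ hy)
  refine (hf.bdd_mul (Measurable.aestronglyMeasurable (by fun_prop))
    (.of_forall hbound)).congr (.of_forall fun ξ ↦ ?_)
  have : 0 < (1 + ‖ξ‖ ^ 2) ^ p := by positivity
  dsimp only
  rw [div_rpow (by positivity) (by positivity), rpow_neg (by positivity), rpow_neg (by positivity)]
  field_simp

lemma hasDerivAt_halfSpacePotential (hp : 0 ≤ p)
    (hf : Integrable fun ξ ↦ (1 + ‖ξ‖ ^ 2) ^ (-p) * f ξ) (x : E) {y : ℝ} (hy : 0 < y) :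
    HasDerivAt (halfSpacePotential p f x) (-2 * p * y * halfSpacePotential (p + 1) f x y) y := by
  have hderiv (ξ : E) {u : ℝ} (hu : 0 < u) :
      HasDerivAt (fun u ↦ (‖x - ξ‖ ^ 2 + u ^ 2) ^ (-p) * f ξ)
        (-2 * p * u * ((‖x - ξ‖ ^ 2 + u ^ 2) ^ (-(p + 1)) * f ξ)) u := by
    have := ((((hasDerivAt_pow 2 u).const_add (‖x - ξ‖ ^ 2)).rpow_const (p := -p)
      (.inl (by positivity))).mul_const (f ξ))
    exact this.congr_deriv (by rw [neg_add', Nat.cast_ofNat]; ring)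
  have hbound (ξ : E) {u : ℝ} (hu : u ∈ Set.Ioi (y / 2)) :
      ‖-2 * p * u * ((‖x - ξ‖ ^ 2 + u ^ 2) ^ (-(p + 1)) * f ξ)‖ ≤
        2 * p * (y / 2)⁻¹ * ‖(‖x - ξ‖ ^ 2 + (y / 2) ^ 2) ^ (-p) * f ξ‖ := by
    have hu0 : 0 < u := (half_pos hy).trans hu
    have h := mul_add_sq_rpow_neg_add_one_le hp (sq_nonneg ‖x - ξ‖) (half_pos hy) hu.le
    calc _ = 2 * p * (u * (‖x - ξ‖ ^ 2 + u ^ 2) ^ (-(p + 1))) * ‖f ξ‖ := by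
          rw [← mul_assoc, norm_mul, neg_mul, neg_mul, neg_mul, norm_neg,
            norm_of_nonneg (by positivity)]
          ring
      _ ≤ 2 * p * ((y / 2)⁻¹ * (‖x - ξ‖ ^ 2 + (y / 2) ^ 2) ^ (-p)) * ‖f ξ‖ := by gcongr
      _ = _ := by rw [norm_mul, norm_of_nonneg (rpow_nonneg (by positivity) _)]; ring
  have hmeas (q u : ℝ) : AEStronglyMeasurable fun ξ ↦ (‖x - ξ‖ ^ 2 + u ^ 2) ^ (-q) * f ξ :=
    (Measurable.aestronglyMeasurable (by fun_prop)).mul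
      (aestronglyMeasurable_of_one_add_sq_norm_rpow_mul hf.1)
  have key := hasDerivAt_integral_of_dominated_loc_of_deriv_le (Ioi_mem_nhds (half_lt_self hy))
    (.of_forall (hmeas p)) (integrable_sq_norm_sub_add_sq_rpow_neg_mul hp hf x hy.ne')
    ((hmeas (p + 1) y).const_mul _) (.of_forall fun ξ u hu ↦ hbound ξ hu)
    ((integrable_sq_norm_sub_add_sq_rpow_neg_mul hp hf x (half_pos hy).ne').norm.const_mul _)
    (.of_forall fun ξ u hu ↦ hderiv ξ ((half_pos hy).trans hu))
  exact key.2.congr_deriv (integral_const_mul _ _)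

end PotentialDeriv

section Convolution

variable {G : Type*} [AddCommGroup G] [MeasurableSpace G] [MeasurableAdd₂ G] [MeasurableNeg G]
  {μ : Measure G} [SFinite μ] [μ.IsAddRightInvariant] {f k : G → ℝ}

lemma integrable_comp_sub_mul_snd (hk : Integrable k μ) (hf : Integrable f μ) :
    Integrable (fun z : G × G ↦ k (z.1 - z.2) * f z.2) (μ.prod μ) := by
  simpa [mul_comm] using hf.convolution_integrand (ContinuousLinearMap.mul ℝ ℝ) hk

lemma integrable_comp_sub_mul_fst [μ.IsNegInvariant] (hk : Integrable k μ) (hf : Integrable f μ) :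
    Integrable (fun z : G × G ↦ k (z.1 - z.2) * f z.1) (μ.prod μ) := by
  simpa [Function.comp_def] using (integrable_comp_sub_mul_snd hk.comp_neg hf).swap

lemma integrable_comp_sub_mul_mul [μ.IsNegInvariant] (hk : Integrable k μ)
    (hf : Integrable (fun x ↦ f x ^ 2) μ) (hf' : AEStronglyMeasurable f μ) :
    Integrable (fun z : G × G ↦ k (z.1 - z.2) * (f z.1 * f z.2)) (μ.prod μ) := by
  have hk' : AEStronglyMeasurable (fun z : G × G ↦ k (z.1 - z.2)) (μ.prod μ) :=
    hk.1.comp_quasiMeasurePreserving (quasiMeasurePreserving_sub_of_right_invariant μ μ)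
  refine ((integrable_comp_sub_mul_fst hk hf).norm.add
    (integrable_comp_sub_mul_snd hk hf).norm).mono' (hk'.mul (hf'.comp_fst.mul hf'.comp_snd))
    (.of_forall fun z ↦ ?_)
  simp only [norm_mul, norm_pow, Pi.add_apply, ← mul_add]
  gcongr
  nlinarith [sq_nonneg (‖f z.1‖ - ‖f z.2‖), sq_nonneg (‖f z.1‖ + ‖f z.2‖)]

end Convolution

lemma rpow_neg_mul_rpow_neg_mul_rpow_neg_le {a b c α β κ t : ℝ} (ha : 0 < a) (hb : 0 < b)
    (hc : 0 < c) (ht : 0 < t) (hα : α ≤ t) (hβ : β ≤ t) (hκ : κ ≤ t) (hsum : α + β + κ = 2 * t) :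
    c ^ (-κ) * (a ^ (-α) * b ^ (-β)) ≤ (1 - α / t) * (c ^ (-t) * b ^ (-t)) +
      (1 - β / t) * (c ^ (-t) * a ^ (-t)) + (1 - κ / t) * (a ^ (-t) * b ^ (-t)) := by
  refine le_trans (le_of_eq ?_) (geom_mean_le_arith_mean3_weighted
    (sub_nonneg.2 ((div_le_one ht).2 hα)) (sub_nonneg.2 ((div_le_one ht).2 hβ))
    (sub_nonneg.2 ((div_le_one ht).2 hκ)) (by positivity) (by positivity) (by positivity) ?_)
  · have h (u : ℝ) : t * (1 - u / t) = t - u := by field_simp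
    simp only [mul_rpow (rpow_nonneg ha.le _) (rpow_nonneg hb.le _),
      mul_rpow (rpow_nonneg hc.le _) (rpow_nonneg ha.le _),
      mul_rpow (rpow_nonneg hc.le _) (rpow_nonneg hb.le _), ← rpow_mul ha.le, ← rpow_mul hb.le,
      ← rpow_mul hc.le, neg_mul, h]
    rw [show -κ = -(t - α) + -(t - β) by linarith, show -α = -(t - β) + -(t - κ) by linarith,
      show -β = -(t - α) + -(t - κ) by linarith, rpow_add ha, rpow_add hb, rpow_add hc]
    ring
  · field_simp
    linarith

lemma norm_rpow_neg_le_indicator_add {E : Type*} [SeminormedAddCommGroup E] {κ : ℝ} (hκ : 0 ≤ κ)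
    (x : E) :
    ‖x‖ ^ (-(2 * κ)) ≤ (Metric.ball 0 1).indicator (fun x ↦ ‖x‖ ^ (-(2 * κ))) x +
      2 ^ κ * (1 + ‖x‖ ^ 2) ^ (-κ) := by
  by_cases hx : x ∈ Metric.ball 0 1
  · rw [Set.indicator_of_mem hx]
    exact le_add_of_nonneg_right (by positivity)
  · have hx' : 1 ≤ ‖x‖ := by simpa using hx
    rw [Set.indicator_of_notMem hx, zero_add, rpow_neg (by positivity), rpow_neg (by positivity),
      ← div_eq_mul_inv, ← div_rpow (by positivity) (by positivity), ← inv_rpow (by positivity),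
      rpow_mul (by positivity), rpow_two]
    gcongr
    rw [inv_pow, inv_le_comm₀ (by positivity) (by positivity), inv_div,
      div_le_iff₀ two_pos]
    nlinarith

section Bubble

variable {E : Type*} [NormedAddCommGroup E] [NormedSpace ℝ E] [FiniteDimensional ℝ E]
  [MeasurableSpace E] [BorelSpace E] (μ : Measure E) [μ.IsAddHaarMeasure]

lemma integrable_one_add_sq_norm_rpow_neg {t : ℝ} (ht : finrank ℝ E < 2 * t) :
    Integrable (fun x : E ↦ (1 + ‖x‖ ^ 2) ^ (-t)) μ := by
  simpa [neg_div] using integrable_rpow_neg_one_add_norm_sq (μ := μ) ht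

lemma integrable_one_add_sq_norm_rpow_neg_mul_mul {α β κ t : ℝ} (ht : finrank ℝ E < 2 * t)
    (hα : α ≤ t) (hβ : β ≤ t) (hκ : κ ≤ t) (hsum : α + β + κ = 2 * t) :
    Integrable (fun ξ : E × E ↦ (1 + ‖ξ.1 - ξ.2‖ ^ 2) ^ (-κ) *
      ((1 + ‖ξ.1‖ ^ 2) ^ (-α) * (1 + ‖ξ.2‖ ^ 2) ^ (-β))) (μ.prod μ) := by
  have h := integrable_one_add_sq_norm_rpow_neg μ ht
  refine ((((integrable_comp_sub_mul_snd h h).const_mul (1 - α / t)).add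
    ((integrable_comp_sub_mul_fst h h).const_mul (1 - β / t))).add
    ((h.mul_prod h).const_mul (1 - κ / t))).mono' (Measurable.aestronglyMeasurable (by fun_prop))
    (.of_forall fun ξ ↦ ?_)
  rw [norm_of_nonneg (by positivity)]
  exact rpow_neg_mul_rpow_neg_mul_rpow_neg_le (by positivity) (by positivity) (by positivity)
    (by linarith [(finrank ℝ E).cast_nonneg (α := ℝ)]) hα hβ hκ hsum

lemma integrable_norm_sub_rpow_neg_mul_one_add_sq_norm_rpow_neg {α κ : ℝ} (hκ₀ : 0 ≤ κ)
    (hκ : 2 * κ < finrank ℝ E) (hακ : finrank ℝ E < 2 * α + κ) :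
    Integrable (fun ξ : E × E ↦ ‖ξ.1 - ξ.2‖ ^ (-(2 * κ)) *
      ((1 + ‖ξ.1‖ ^ 2) ^ (-α) * (1 + ‖ξ.2‖ ^ 2) ^ (-α))) (μ.prod μ) := by
  have hnear : Integrable ((Metric.ball 0 1).indicator fun x : E ↦ ‖x‖ ^ (-(2 * κ))) μ := by
    rw [integrable_indicator_iff Metric.isOpen_ball.measurableSet]
    refine integrableOn_ball_of_norm_le_rpow ?_ hκ (C := 1) (.of_forall fun x ↦ ?_)
      (Measurable.aestronglyMeasurable (by fun_prop))
    · exact Nat.cast_pos.1 (hκ.trans_le' (by positivity))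
    · rw [one_mul, norm_of_nonneg (by positivity)]
  have hsq : Integrable (fun x : E ↦ ((1 + ‖x‖ ^ 2) ^ (-α)) ^ 2) μ := by
    refine (integrable_one_add_sq_norm_rpow_neg μ (t := 2 * α) (by linarith)).congr
      (.of_forall fun x ↦ ?_)
    dsimp only
    rw [← rpow_mul_natCast (by positivity), Nat.cast_ofNat]
    ring_nf
  have hfar := integrable_one_add_sq_norm_rpow_neg_mul_mul μ (t := α + κ / 2)
    (by linarith) (by linarith) (by linarith) (by linarith) (by ring : α + α + κ = _)
  refine ((integrable_comp_sub_mul_mul hnear hsq (Measurable.aestronglyMeasurable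
    (by fun_prop))).add (hfar.const_mul (2 ^ κ))).mono' (Measurable.aestronglyMeasurable
    (by fun_prop)) (.of_forall fun ξ ↦ ?_)
  rw [norm_of_nonneg (by positivity), Pi.add_apply, ← mul_assoc (2 ^ κ), ← add_mul]
  gcongr
  exact norm_rpow_neg_le_indicator_add hκ₀ _

lemma integrable_weight_mul_bubble (γ : ℝ) (hd : 0 < finrank ℝ E) :
    Integrable (fun ξ : E ↦ (1 + ‖ξ‖ ^ 2) ^ (-((finrank ℝ E + 2 * γ) / 2)) *
      (1 + ‖ξ‖ ^ 2) ^ (-((finrank ℝ E - 2 * γ) / 2))) μ := by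
  have hd' : (0 : ℝ) < finrank ℝ E := Nat.cast_pos.2 hd
  refine (integrable_one_add_sq_norm_rpow_neg μ (t := finrank ℝ E) (by linarith)).congr
    (.of_forall fun ξ ↦ ?_)
  dsimp only
  rw [← rpow_add (by positivity)]
  ring_nf

lemma integrable_energy_bubble {γ : ℝ} (hγ : γ < 2) (hdγ : 4 ≤ finrank ℝ E + 2 * γ)
    (hdγ' : 4 + 2 * γ < finrank ℝ E) :
    Integrable (fun ξ : E × E ↦ ‖ξ.1 - ξ.2‖ ^ (4 - finrank ℝ E - 2 * γ) *
      ((1 + ‖ξ.1‖ ^ 2) ^ (-((finrank ℝ E - 2 * γ) / 2)) *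
        (1 + ‖ξ.2‖ ^ 2) ^ (-((finrank ℝ E - 2 * γ) / 2)))) (μ.prod μ) := by
  convert integrable_norm_sub_rpow_neg_mul_one_add_sq_norm_rpow_neg μ
    (α := (finrank ℝ E - 2 * γ) / 2) (κ := (finrank ℝ E + 2 * γ - 4) / 2)
    (by linarith) (by linarith) (by linarith) using 4
  ring

end Bubble

section PoissonExtension

variable {E : Type*} [NormedAddCommGroup E] [InnerProductSpace ℝ E] [FiniteDimensional ℝ E]
  [MeasurableSpace E] [BorelSpace E] {γ : ℝ} {w : E → ℝ}

/-- The Caffarelli–Silvestre extension of `w` to the half-space, up to the normalizing constant of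
the Poisson kernel. -/
noncomputable def poissonExtension (γ : ℝ) (w : E → ℝ) (x : E) (y : ℝ) : ℝ :=
  ∫ ξ, y ^ (2 * γ) * (‖x - ξ‖ ^ 2 + y ^ 2) ^ (-((finrank ℝ E + 2 * γ) / 2)) * w ξ

lemma poissonExtension_eq (γ : ℝ) (w : E → ℝ) (x : E) (y : ℝ) :
    poissonExtension γ w x y =
      y ^ (2 * γ) * halfSpacePotential ((finrank ℝ E + 2 * γ) / 2) w x y := by
  simp only [poissonExtension, halfSpacePotential, mul_assoc, integral_const_mul]

lemma deriv_poissonExtension (hγ : 0 ≤ finrank ℝ E + 2 * γ)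
    (hw : Integrable fun ξ ↦ (1 + ‖ξ‖ ^ 2) ^ (-((finrank ℝ E + 2 * γ) / 2)) * w ξ) (x : E) {y : ℝ}
    (hy : 0 < y) :
    deriv (poissonExtension γ w x) y =
      2 * γ * y ^ (2 * γ - 1) * halfSpacePotential ((finrank ℝ E + 2 * γ) / 2) w x y -
        (finrank ℝ E + 2 * γ) * y ^ (2 * γ + 1) *
          halfSpacePotential ((finrank ℝ E + 2 * γ) / 2 + 1) w x y := by
  have h := (hasDerivAt_rpow_const (p := 2 * γ) (.inl hy.ne')).mul
    (hasDerivAt_halfSpacePotential (by positivity) hw x hy)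
  rw [funext (poissonExtension_eq γ w x)]
  refine h.deriv.trans ?_
  rw [rpow_add_one hy.ne']
  ring

lemma rpow_mul_poissonExtension_sq (γ : ℝ) (w : E → ℝ) (x : E) {y : ℝ} (hy : 0 < y) :
    y ^ (3 - 2 * γ) * poissonExtension γ w x y ^ 2 =
      y ^ (3 + 2 * γ) * (halfSpacePotential ((finrank ℝ E + 2 * γ) / 2) w x y *
        halfSpacePotential ((finrank ℝ E + 2 * γ) / 2) w x y) := by
  rw [poissonExtension_eq, show 3 + 2 * γ = 3 - 2 * γ + 2 * γ + 2 * γ by ring, rpow_add hy,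
    rpow_add hy]
  ring

lemma rpow_mul_deriv_poissonExtension_sq (hγ : 0 ≤ finrank ℝ E + 2 * γ)
    (hw : Integrable fun ξ ↦ (1 + ‖ξ‖ ^ 2) ^ (-((finrank ℝ E + 2 * γ) / 2)) * w ξ) (x : E) {y : ℝ}
    (hy : 0 < y) :
    let s := (finrank ℝ E + 2 * γ) / 2
    y ^ (5 - 2 * γ) * deriv (poissonExtension γ w x) y ^ 2 =
      4 * γ ^ 2 * (y ^ (3 + 2 * γ) *
        (halfSpacePotential s w x y * halfSpacePotential s w x y)) -
      8 * γ * s * (y ^ (5 + 2 * γ) *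
        (halfSpacePotential (s + 1) w x y * halfSpacePotential s w x y)) +
      4 * s ^ 2 * (y ^ (7 + 2 * γ) *
        (halfSpacePotential (s + 1) w x y * halfSpacePotential (s + 1) w x y)) := by
  dsimp only
  rw [deriv_poissonExtension hγ hw x hy, rpow_sub hy, rpow_sub hy, rpow_add hy, rpow_add hy,
    rpow_add hy, rpow_add hy, rpow_one]
  norm_cast
  field_simp
  ring

variable [Nontrivial E]

section
variable (hγ : -2 < γ) (hdγ : 4 < finrank ℝ E + 2 * γ)
  (henergy : Integrable fun ξ : E × E ↦
    ‖ξ.1 - ξ.2‖ ^ (4 - finrank ℝ E - 2 * γ) * (w ξ.1 * w ξ.2))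
include hγ hdγ henergy

lemma integrable_rpow_mul_halfSpacePotential_shift (hw : AEStronglyMeasurable w) {i j : ℝ}
    (hi : 0 ≤ i) (hj : 0 ≤ j) :
    Integrable (fun z ↦ z.1 ^ (3 + 2 * (i + j) + 2 * γ) *
      (halfSpacePotential ((finrank ℝ E + 2 * γ) / 2 + i) w z.2 z.1 *
        halfSpacePotential ((finrank ℝ E + 2 * γ) / 2 + j) w z.2 z.1)) (halfSpaceMeasure E) := by
  have h := integrable_rpow_mul_halfSpacePotential_mul_halfSpacePotential
    (m := (finrank ℝ E + 2 * γ) / 2 + (2 + i + j)) (p := (finrank ℝ E + 2 * γ) / 2 + i)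
    (q := (finrank ℝ E + 2 * γ) / 2 + j) (by linarith) (by linarith) (by linarith) (by linarith)
    hw hw
  ring_nf at h henergy ⊢
  exact h henergy

lemma integral_rpow_mul_halfSpacePotential_shift (hw : AEStronglyMeasurable w) {i j : ℝ}
    (hi : 0 ≤ i) (hj : 0 ≤ j) :
    ∫ z, z.1 ^ (3 + 2 * (i + j) + 2 * γ) *
      (halfSpacePotential ((finrank ℝ E + 2 * γ) / 2 + i) w z.2 z.1 *
        halfSpacePotential ((finrank ℝ E + 2 * γ) / 2 + j) w z.2 z.1) ∂halfSpaceMeasure E =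
      kernelConstant (finrank ℝ E) ((finrank ℝ E + 2 * γ) / 2 + (2 + i + j))
        ((finrank ℝ E + 2 * γ) / 2 + i) ((finrank ℝ E + 2 * γ) / 2 + j) *
      ∫ ξ : E × E, ‖ξ.1 - ξ.2‖ ^ (4 - finrank ℝ E - 2 * γ) * (w ξ.1 * w ξ.2) := by
  have h := integral_rpow_mul_halfSpacePotential_mul_halfSpacePotential
    (m := (finrank ℝ E + 2 * γ) / 2 + (2 + i + j)) (p := (finrank ℝ E + 2 * γ) / 2 + i)
    (q := (finrank ℝ E + 2 * γ) / 2 + j) (by linarith) (by linarith) (by linarith) (by linarith)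
    hw hw
  ring_nf at h henergy ⊢
  exact h henergy

lemma integrable_rpow_mul_poissonExtension_sq (hw : AEStronglyMeasurable w) :
    Integrable (fun z ↦ z.1 ^ (3 - 2 * γ) * poissonExtension γ w z.2 z.1 ^ 2)
      (halfSpaceMeasure E) := by
  have h := integrable_rpow_mul_halfSpacePotential_shift hγ hdγ henergy hw le_rfl le_rfl
  norm_num at h
  refine h.congr ?_
  filter_upwards [ae_halfSpaceMeasure_pos] with z hz
  exact (rpow_mul_poissonExtension_sq γ w z.2 hz).symm

lemma integral_rpow_mul_poissonExtension_sq (hw : AEStronglyMeasurable w) :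
    ∫ z, z.1 ^ (3 - 2 * γ) * poissonExtension γ w z.2 z.1 ^ 2 ∂halfSpaceMeasure E =
      kernelConstant (finrank ℝ E) ((finrank ℝ E + 2 * γ) / 2 + 2)
        ((finrank ℝ E + 2 * γ) / 2) ((finrank ℝ E + 2 * γ) / 2) *
      ∫ ξ : E × E, ‖ξ.1 - ξ.2‖ ^ (4 - finrank ℝ E - 2 * γ) * (w ξ.1 * w ξ.2) := by
  have h := integral_rpow_mul_halfSpacePotential_shift hγ hdγ henergy hw le_rfl le_rfl
  norm_num at h
  rw [← h]
  refine integral_congr_ae ?_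
  filter_upwards [ae_halfSpaceMeasure_pos] with z hz
  exact rpow_mul_poissonExtension_sq γ w z.2 hz

lemma integrable_rpow_mul_deriv_poissonExtension_sq
    (hw : Integrable fun ξ ↦ (1 + ‖ξ‖ ^ 2) ^ (-((finrank ℝ E + 2 * γ) / 2)) * w ξ) :
    Integrable (fun z ↦ z.1 ^ (5 - 2 * γ) * deriv (poissonExtension γ w z.2) z.1 ^ 2)
      (halfSpaceMeasure E) := by
  have hw_meas := aestronglyMeasurable_of_one_add_sq_norm_rpow_mul hw.1
  have hint {i j : ℝ} := integrable_rpow_mul_halfSpacePotential_shift (i := i) (j := j) hγ hdγ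
    henergy hw_meas
  have h₀₀ := hint le_rfl le_rfl
  have h₁₀ := hint zero_le_one le_rfl
  have h₁₁ := hint zero_le_one zero_le_one
  norm_num at h₀₀ h₁₀ h₁₁
  refine (((h₀₀.const_mul (4 * γ ^ 2)).sub
    (h₁₀.const_mul (8 * γ * ((finrank ℝ E + 2 * γ) / 2)))).add
    (h₁₁.const_mul (4 * ((finrank ℝ E + 2 * γ) / 2) ^ 2))).congr ?_
  filter_upwards [ae_halfSpaceMeasure_pos] with z hz
  exact (rpow_mul_deriv_poissonExtension_sq (by linarith) hw z.2 hz).symm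

lemma integral_rpow_mul_deriv_poissonExtension_sq
    (hw : Integrable fun ξ ↦ (1 + ‖ξ‖ ^ 2) ^ (-((finrank ℝ E + 2 * γ) / 2)) * w ξ) :
    ∫ z, z.1 ^ (5 - 2 * γ) * deriv (poissonExtension γ w z.2) z.1 ^ 2 ∂halfSpaceMeasure E =
      (6 - 2 * γ) * (4 - 2 * γ) / 5 *
        ∫ z, z.1 ^ (3 - 2 * γ) * poissonExtension γ w z.2 z.1 ^ 2 ∂halfSpaceMeasure E := by
  have hw_meas := aestronglyMeasurable_of_one_add_sq_norm_rpow_mul hw.1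
  have hint {i j : ℝ} := integrable_rpow_mul_halfSpacePotential_shift (i := i) (j := j) hγ hdγ
    henergy hw_meas
  have hval {i j : ℝ} := integral_rpow_mul_halfSpacePotential_shift (i := i) (j := j) hγ hdγ
    henergy hw_meas
  have h₀₀ := hint le_rfl le_rfl
  have h₁₀ := hint zero_le_one le_rfl
  have h₁₁ := hint zero_le_one zero_le_one
  have v₀₀ := hval le_rfl le_rfl
  have v₁₀ := hval zero_le_one le_rfl
  have v₁₁ := hval zero_le_one zero_le_one
  norm_num at h₀₀ h₁₀ h₁₁ v₀₀ v₁₀ v₁₁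
  rw [integral_rpow_mul_poissonExtension_sq hγ hdγ henergy hw_meas, ← mul_assoc,
    ← kernelConstant_quadratic_combination hγ (by linarith) (by ring), add_mul, sub_mul]
  simp only [mul_assoc (_ * _) (kernelConstant _ _ _ _), ← v₀₀, ← v₁₀, ← v₁₁, ← integral_const_mul]
  rw [← integral_sub (h₀₀.const_mul _) (h₁₀.const_mul _)]
  refine (integral_congr_ae ?_).trans
    (integral_add ((h₀₀.const_mul _).sub (h₁₀.const_mul _)) (h₁₁.const_mul _))
  filter_upwards [ae_halfSpaceMeasure_pos] with z hz
  exact rpow_mul_deriv_poissonExtension_sq (by linarith) hw z.2 hz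

theorem stmt_14_general {a : ℝ} (ha : a = 1 - 2 * γ)
    (hw : Integrable fun ξ ↦ (1 + ‖ξ‖ ^ 2) ^ (-((finrank ℝ E + 2 * γ) / 2)) * w ξ) :
    ∫ y in Set.Ioi 0, ∫ x, y ^ (a + 4) * deriv (poissonExtension γ w x) y ^ 2 =
      (a + 5) * (a + 3) / 5 *
        ∫ y in Set.Ioi 0, ∫ x, y ^ (a + 2) * poissonExtension γ w x y ^ 2 := by
  have hU := integrable_rpow_mul_poissonExtension_sq hγ hdγ henergy
    (aestronglyMeasurable_of_one_add_sq_norm_rpow_mul hw.1)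
  have hU' := integrable_rpow_mul_deriv_poissonExtension_sq hγ hdγ henergy hw
  have h := integral_rpow_mul_deriv_poissonExtension_sq hγ hdγ henergy hw
  rw [halfSpaceMeasure, integral_prod _ hU', integral_prod _ hU] at h
  rw [show a + 4 = 5 - 2 * γ by linarith, show a + 2 = 3 - 2 * γ by linarith,
    show a + 5 = 6 - 2 * γ by linarith, show a + 3 = 4 - 2 * γ by linarith]
  exact h

end
end PoissonExtension

open MeasureTheory Real in
theorem stmt_14 (γ : ℝ) (hγ : γ ∈ Set.Ioo (0:ℝ) 1) (a : ℝ) (ha : a = 1 - 2*γ)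
    (n : ℕ) (hn : 4 + 2*γ < (n:ℝ))
    (w : EuclideanSpace ℝ (Fin n) → ℝ)
    (hw : ∀ x : EuclideanSpace ℝ (Fin n), w x = (1 + ‖x‖^2) ^ (-(((n:ℝ) - 2*γ)/2)))
    (U : EuclideanSpace ℝ (Fin n) → ℝ → ℝ)
    (hU : ∀ x : EuclideanSpace ℝ (Fin n), ∀ y : ℝ,
      U x y = ∫ ξ : EuclideanSpace ℝ (Fin n),
        y ^ (2*γ) * (‖x - ξ‖^2 + y^2) ^ (-(((n:ℝ) + 2*γ)/2)) * w ξ) :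
    ∫ y in Set.Ioi (0:ℝ), ∫ x : EuclideanSpace ℝ (Fin n),
      y ^ (a+4) * (deriv (U x) y)^2 =
    ((a+5)*(a+3)/5) * ∫ y in Set.Ioi (0:ℝ), ∫ x : EuclideanSpace ℝ (Fin n),
      y ^ (a+2) * (U x y)^2 := by
  obtain ⟨hγ₀, hγ₁⟩ := hγ
  obtain rfl : U = poissonExtension γ w := by
    ext x y
    simp [hU, poissonExtension]
  obtain rfl := funext hw
  have hfinrank : (finrank ℝ (EuclideanSpace ℝ (Fin n)) : ℝ) = n := by simp
  have hpos : 0 < finrank ℝ (EuclideanSpace ℝ (Fin n)) :=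
    (Nat.cast_pos (α := ℝ)).1 (by linarith)
  have : Nontrivial (EuclideanSpace ℝ (Fin n)) := nontrivial_of_finrank_pos hpos
  have henergy := integrable_energy_bubble (E := EuclideanSpace ℝ (Fin n)) volume
    (γ := γ) (by linarith) (by linarith) (by linarith)
  have hweight := integrable_weight_mul_bubble (E := EuclideanSpace ℝ (Fin n)) volume γ hpos
  simp only [← hfinrank]
  exact stmt_14_general (by linarith) (by linarith) henergy ha hweight
end

section
/- With U the Poisson extension of w(x) = (1 + |x|²)^{−(n−2γ)/2} as defined in the context, one has ∫_{ℝ^{n+1}_+} y^{a}·x₁²·U² dx dy = [(3n² − 18n − (a² − 2a − 27)) / (2·(n−3)·(3−a)·(a+1))]·∫_{ℝ^{n+1}_+} y^{a+2}·U² dx dy. -/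
/-!
The bubble `(1 + ‖x‖²) ^ (-(n - 2γ) / 2)` and the Poisson kernel are both superpositions of
Gaussians with Gamma-type weights, so by the semigroup law the extension `U` is a superposition, over `s` and
`t`, of heat kernels at time `t + s⁻¹`. Squaring `U` and exchanging integrals (everything is
nonnegative) leaves Gaussian moments in `x` and a Gamma integral in `y`, hence an integral over
`s, s', t, t'` of powers of `t + t'`, `s⁻¹ + s'⁻¹` and `t + t' + s⁻¹ + s'⁻¹`. Integrating over the
simplices `t + t' = T` and `s + s' = R` turns it into Beta and Gamma values. For the two weights in
question these differ only by unit shifts of the arguments, so their ratio is rational.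
-/

namespace CaffarelliSilvestre

open MeasureTheory ProbabilityTheory Real Set
open Module (finrank)
open scoped ENNReal

section LIntegral

variable {α β δ : Type*} [MeasurableSpace α] [MeasurableSpace β] [MeasurableSpace δ]

theorem lintegral_ofReal_const_mul {μ : Measure α} {c : ℝ} (hc : 0 ≤ c) (f : α → ℝ) :
    ∫⁻ x, ENNReal.ofReal (c * f x) ∂μ = ENNReal.ofReal c * ∫⁻ x, ENNReal.ofReal (f x) ∂μ := by
  simp_rw [ENNReal.ofReal_mul hc]
  exact lintegral_const_mul' _ _ ENNReal.ofReal_ne_top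

theorem lintegral_ofReal_eq_of_integral_eq {μ : Measure α} {f : α → ℝ} {c : ℝ}
    (hf : 0 ≤ᵐ[μ] f) (hc : 0 < c) (h : ∫ x, f x ∂μ = c) :
    ∫⁻ x, ENNReal.ofReal (f x) ∂μ = ENNReal.ofReal c := by
  have hint : Integrable f μ := Integrable.of_integral_ne_zero (h ▸ hc.ne')
  rw [← h, ofReal_integral_eq_lintegral_ofReal hint hf]

theorem setLIntegral_Ioi_ofReal_eq_of_integral_eq {f : ℝ → ℝ} {c : ℝ}
    (hf : ∀ x, 0 < x → 0 ≤ f x) (hc : 0 < c) (h : ∫ x in Ioi 0, f x = c) :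
    ∫⁻ x in Ioi 0, ENNReal.ofReal (f x) = ENNReal.ofReal c :=
  lintegral_ofReal_eq_of_integral_eq
    ((ae_restrict_iff' measurableSet_Ioi).2 (.of_forall hf)) hc h

theorem lintegral_mul_lintegral_swap {μ : Measure α} {ν : Measure β} {ρ : Measure δ}
    [SFinite μ] [SFinite ν] [SFinite ρ] {k : α → δ → ℝ≥0∞} {l : β → δ → ℝ≥0∞}
    (hk : Measurable (Function.uncurry k)) (hl : Measurable (Function.uncurry l)) :
    ∫⁻ z, (∫⁻ x, k x z ∂μ) * ∫⁻ y, l y z ∂ν ∂ρ =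
      ∫⁻ x, ∫⁻ y, ∫⁻ z, k x z * l y z ∂ρ ∂ν ∂μ := by
  have hl' : Measurable fun z => ∫⁻ y, l y z ∂ν :=
    Measurable.lintegral_prod_right' (f := fun p : δ × β => l p.2 p.1) (by fun_prop)
  calc ∫⁻ z, (∫⁻ x, k x z ∂μ) * ∫⁻ y, l y z ∂ν ∂ρ
      = ∫⁻ z, ∫⁻ x, k x z * ∫⁻ y, l y z ∂ν ∂μ ∂ρ := by
        refine lintegral_congr fun z => (lintegral_mul_const _ ?_).symm
        exact hk.comp measurable_prodMk_right
    _ = ∫⁻ x, ∫⁻ z, k x z * ∫⁻ y, l y z ∂ν ∂ρ ∂μ := by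
        refine lintegral_lintegral_swap (Measurable.aemeasurable ?_)
        exact (hk.comp measurable_swap).mul (hl'.comp measurable_fst)
    _ = ∫⁻ x, ∫⁻ z, ∫⁻ y, k x z * l y z ∂ν ∂ρ ∂μ := by
        refine lintegral_congr fun x => lintegral_congr fun z => (lintegral_const_mul _ ?_).symm
        exact hl.comp measurable_prodMk_right
    _ = _ := by
        refine lintegral_congr fun x => lintegral_lintegral_swap (Measurable.aemeasurable ?_)
        exact (hk.comp (measurable_const.prodMk measurable_fst)).mul (hl.comp measurable_swap)

theorem lintegral_mul_sq_lintegral_lintegral {μ : Measure α} {ν : Measure β} {ρ : Measure δ}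
    [SFinite μ] [SFinite ν] [SFinite ρ] {w : δ → ℝ≥0∞} {k : α → β → δ → ℝ≥0∞} (hw : Measurable w)
    (hk : Measurable fun p : (α × δ) × β => k p.1.1 p.2 p.1.2) :
    ∫⁻ z, w z * (∫⁻ s, ∫⁻ t, k s t z ∂ν ∂μ) ^ 2 ∂ρ =
      ∫⁻ s, ∫⁻ s', ∫⁻ t, ∫⁻ t', ∫⁻ z, w z * (k s t z * k s' t' z) ∂ρ ∂ν ∂ν ∂μ ∂μ := by
  have hkt (s : α) (z : δ) : Measurable fun t => k s t z :=
    hk.comp (measurable_prodMk_left (x := (s, z)))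
  have hktz (s : α) : Measurable fun p : β × δ => k s p.1 p.2 :=
    hk.comp ((measurable_const.prodMk measurable_snd).prodMk measurable_fst)
  have hB : Measurable fun p : α × δ => ∫⁻ t, k p.1 t p.2 ∂ν := hk.lintegral_prod_right'
  have hBs (z : δ) : Measurable fun s => ∫⁻ t, k s t z ∂ν := hB.comp measurable_prodMk_right
  calc ∫⁻ z, w z * (∫⁻ s, ∫⁻ t, k s t z ∂ν ∂μ) ^ 2 ∂ρ
      = ∫⁻ z, (∫⁻ s, w z * ∫⁻ t, k s t z ∂ν ∂μ) * ∫⁻ s', ∫⁻ t', k s' t' z ∂ν ∂μ ∂ρ := by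
        refine lintegral_congr fun z => ?_
        rw [lintegral_const_mul _ (hBs z), sq, mul_assoc]
    _ = ∫⁻ s, ∫⁻ s', ∫⁻ z, (w z * ∫⁻ t, k s t z ∂ν) * ∫⁻ t', k s' t' z ∂ν ∂ρ ∂μ ∂μ :=
        lintegral_mul_lintegral_swap ((hw.comp measurable_snd).mul hB) hB
    _ = ∫⁻ s, ∫⁻ s', ∫⁻ z, (∫⁻ t, w z * k s t z ∂ν) * ∫⁻ t', k s' t' z ∂ν ∂ρ ∂μ ∂μ := by
        simp_rw [lintegral_const_mul _ (hkt _ _)]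
    _ = ∫⁻ s, ∫⁻ s', ∫⁻ t, ∫⁻ t', ∫⁻ z, w z * k s t z * k s' t' z ∂ρ ∂ν ∂ν ∂μ ∂μ := by
        refine lintegral_congr fun s => lintegral_congr fun s' => ?_
        exact lintegral_mul_lintegral_swap ((hw.comp measurable_snd).mul (hktz s)) (hktz s')
    _ = _ := by simp_rw [mul_assoc]

theorem setIntegral_integral_eq_of_setLIntegral_prod_univ {μ : Measure α} {ν : Measure β}
    [SFinite μ] [SFinite ν] {A : Set α} (hA : MeasurableSet A) {F : α → β → ℝ} {v : ℝ}
    (hFm : Measurable (Function.uncurry F)) (hF : ∀ y ∈ A, ∀ x, 0 ≤ F y x) (hv : 0 ≤ v)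
    (h : ∫⁻ z in A ×ˢ univ, ENNReal.ofReal (F z.1 z.2) ∂μ.prod ν = ENNReal.ofReal v) :
    ∫ y in A, ∫ x, F y x ∂ν ∂μ = v := by
  have hF' : 0 ≤ᵐ[(μ.prod ν).restrict (A ×ˢ univ)] Function.uncurry F :=
    (ae_restrict_iff' (hA.prod .univ)).2 (.of_forall fun z hz => hF z.1 hz.1 z.2)
  have hint : IntegrableOn (Function.uncurry F) (A ×ˢ univ) (μ.prod ν) :=
    (lintegral_ofReal_ne_top_iff_integrable hFm.aestronglyMeasurable hF').1
      (h.trans_ne ENNReal.ofReal_ne_top)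
  calc ∫ y in A, ∫ x, F y x ∂ν ∂μ = ∫ z in A ×ˢ univ, Function.uncurry F z ∂μ.prod ν := by
        rw [setIntegral_prod _ hint]
        simp only [setIntegral_univ, Function.uncurry_apply_pair]
    _ = (ENNReal.ofReal v).toReal := by
        rw [← h]
        exact integral_eq_lintegral_of_nonneg_ae hF' hFm.aestronglyMeasurable
    _ = v := ENNReal.toReal_ofReal hv

end LIntegral

section GammaIntegrals

theorem setLIntegral_rpow_mul_exp_neg_mul {p r : ℝ} (hp : 0 < p) (hr : 0 < r) :
    ∫⁻ t in Ioi 0, ENNReal.ofReal (t ^ (p - 1) * exp (-(r * t))) =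
      ENNReal.ofReal (Gamma p * r ^ (-p)) := by
  refine setLIntegral_Ioi_ofReal_eq_of_integral_eq (fun t ht => by positivity) (by positivity) ?_
  rw [integral_rpow_mul_exp_neg_mul_Ioi hp hr, one_div, inv_rpow hr.le, ← rpow_neg hr.le, mul_comm]

theorem setLIntegral_rpow_neg_mul_exp_neg_div {p r : ℝ} (hp : 0 < p) (hr : 0 < r) :
    ∫⁻ t in Ioi 0, ENNReal.ofReal (t ^ (-p - 1) * exp (-(r / t))) =
      ENNReal.ofReal (Gamma p * r ^ (-p)) := by
  refine setLIntegral_Ioi_ofReal_eq_of_integral_eq (fun t ht => by positivity) (by positivity) ?_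
  rw [mul_comm (Gamma p), rpow_neg hr.le, ← inv_rpow hr.le, ← one_div,
    ← integral_rpow_mul_exp_neg_mul_Ioi hp hr,
    ← integral_comp_rpow_Ioi (fun t : ℝ => t ^ (p - 1) * exp (-(r * t))) (p := -1) (by norm_num)]
  refine setIntegral_congr_fun measurableSet_Ioi fun t (ht : 0 < t) => ?_
  simp only [smul_eq_mul, abs_neg, abs_one, one_mul]
  rw [← rpow_mul ht.le, ← mul_assoc, ← rpow_add ht, rpow_neg_one, div_eq_mul_inv]
  ring_nf

theorem setLIntegral_rpow_mul_exp_neg_mul_sq {m k : ℝ} (hm : 0 < m) (hk : 0 < k) :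
    ∫⁻ y in Ioi 0, ENNReal.ofReal (y ^ (2 * m - 1) * exp (-(k * y ^ 2))) =
      ENNReal.ofReal (Gamma m / 2 * k ^ (-m)) := by
  refine setLIntegral_Ioi_ofReal_eq_of_integral_eq (fun y hy => by positivity) (by positivity) ?_
  have h := integral_rpow_mul_exp_neg_mul_rpow (p := 2) (q := 2 * m - 1) two_pos (by linarith) hk
  simp only [rpow_two, neg_mul, sub_add_cancel, neg_div, mul_div_cancel_left₀ m two_ne_zero] at h
  rw [h]
  ring

end GammaIntegrals

section BetaIntegrals

theorem setLIntegral_Ioi_Ioi_eq_setLIntegral_Ioi_Ioo {f : ℝ → ℝ → ℝ≥0∞}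
    (hf : Measurable (Function.uncurry f)) :
    ∫⁻ u in Ioi 0, ∫⁻ v in Ioi 0, f u v = ∫⁻ T in Ioi 0, ∫⁻ u in Ioo 0 T, f u (T - u) := by
  let F : ℝ → ℝ → ℝ≥0∞ := fun u T => (Ioo 0 T).indicator (fun u => f u (T - u)) u
  have hF : Measurable (Function.uncurry F) := by
    have hmeas : Measurable fun p : ℝ × ℝ => f p.1 (p.2 - p.1) :=
      hf.comp (measurable_fst.prodMk (measurable_snd.sub measurable_fst))
    exact hmeas.indicator ((measurableSet_lt measurable_const measurable_fst).inter
      (measurableSet_lt measurable_fst measurable_snd))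
  have hleft (u : ℝ) : ∫⁻ T, F u T = (Ioi 0).indicator (fun u => ∫⁻ v in Ioi 0, f u v) u := by
    by_cases hu : 0 < u
    · rw [indicator_of_mem (mem_Ioi.2 hu), ← lintegral_indicator measurableSet_Ioi,
        ← lintegral_add_right_eq_self (F u) u]
      simp [F, indicator_apply, hu]
    · simp [F, hu]
  have hright (T : ℝ) :
      ∫⁻ u, F u T = (Ioi 0).indicator (fun T => ∫⁻ u in Ioo 0 T, f u (T - u)) T := by
    by_cases hT : 0 < T
    · rw [lintegral_indicator measurableSet_Ioo, indicator_of_mem (mem_Ioi.2 hT)]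
    · simp [F, hT]
  rw [← lintegral_indicator measurableSet_Ioi, ← lintegral_indicator measurableSet_Ioi]
  simp_rw [← hleft, ← hright]
  exact lintegral_lintegral_swap hF.aemeasurable

theorem setLIntegral_Ioo_one_rpow_mul_one_sub_rpow {p q : ℝ} (hp : 0 < p) (hq : 0 < q) :
    ∫⁻ u in Ioo 0 1, ENNReal.ofReal (u ^ (p - 1) * (1 - u) ^ (q - 1)) =
      ENNReal.ofReal (beta p q) := by
  have hβ : 0 < beta p q := beta_pos hp hq
  have h := lintegral_betaPDF_eq_one hp hq
  simp_rw [lintegral_betaPDF, mul_assoc] at h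
  rw [lintegral_ofReal_const_mul (by positivity), one_div, ENNReal.ofReal_inv_of_pos hβ,
    mul_comm] at h
  rw [ENNReal.eq_inv_of_mul_eq_one_left h, inv_inv]

theorem setLIntegral_Ioo_rpow_mul_sub_rpow {p q T : ℝ} (hp : 0 < p) (hq : 0 < q) (hT : 0 < T) :
    ∫⁻ u in Ioo 0 T, ENNReal.ofReal (u ^ (p - 1) * (T - u) ^ (q - 1)) =
      ENNReal.ofReal (T ^ (p + q - 1) * beta p q) := by
  have himage : (fun u => T * u) '' Ioo 0 1 = Ioo 0 T := by simp [image_mul_left_Ioo hT]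
  have hsubst := lintegral_image_eq_lintegral_abs_deriv_mul (s := Ioo 0 1) (f := fun u => T * u)
    (f' := fun _ => T) measurableSet_Ioo
    (fun x _ => by simpa using ((hasDerivAt_id x).const_mul T).hasDerivWithinAt)
    (mul_right_injective₀ hT.ne').injOn
    (fun u => ENNReal.ofReal (u ^ (p - 1) * (T - u) ^ (q - 1)))
  rw [← himage, hsubst, ENNReal.ofReal_mul (by positivity),
    ← setLIntegral_Ioo_one_rpow_mul_one_sub_rpow hp hq,
    ← lintegral_ofReal_const_mul (by positivity)]
  refine setLIntegral_congr_fun measurableSet_Ioo fun u hu => ?_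
  have hu₁ : 0 ≤ 1 - u := sub_nonneg.2 hu.2.le
  rw [← ENNReal.ofReal_mul (abs_nonneg T), abs_of_pos hT, ← mul_one_sub, mul_rpow hT.le hu.1.le,
    mul_rpow hT.le hu₁, show p + q - 1 = 1 + (p - 1) + (q - 1) by ring, rpow_add hT, rpow_add hT,
    rpow_one]
  ring_nf

theorem setLIntegral_rpow_mul_rpow_mul_comp_add {p q : ℝ} (hp : 0 < p) (hq : 0 < q)
    {g : ℝ → ℝ} (hg : Measurable g) :
    ∫⁻ u in Ioi 0, ∫⁻ v in Ioi 0, ENNReal.ofReal (u ^ (p - 1) * v ^ (q - 1) * g (u + v)) =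
      ENNReal.ofReal (beta p q) * ∫⁻ T in Ioi 0, ENNReal.ofReal (T ^ (p + q - 1) * g T) := by
  rw [setLIntegral_Ioi_Ioi_eq_setLIntegral_Ioi_Ioo (by fun_prop),
    ← lintegral_ofReal_const_mul (beta_pos hp hq).le]
  refine setLIntegral_congr_fun measurableSet_Ioi fun T (hT : 0 < T) => ?_
  have hβ := beta_pos hp hq
  simp only [add_sub_cancel]
  rw [mul_left_comm, ← mul_assoc, ENNReal.ofReal_mul (by positivity),
    ← setLIntegral_Ioo_rpow_mul_sub_rpow hp hq hT,
    ← lintegral_mul_const' _ _ ENNReal.ofReal_ne_top]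
  refine setLIntegral_congr_fun measurableSet_Ioo fun u hu => ?_
  have hu₀ : 0 < u := hu.1
  have huT : 0 ≤ T - u := sub_nonneg.2 hu.2.le
  exact ENNReal.ofReal_mul (by positivity)

theorem setLIntegral_mul_rpow_mul_add_rpow_mul_exp_neg {p e : ℝ} (hp : 0 < p)
    (he : 0 < 2 * p + e) :
    ∫⁻ u in Ioi 0, ∫⁻ v in Ioi 0,
        ENNReal.ofReal ((u * v) ^ (p - 1) * ((u + v) ^ e * exp (-(u + v)))) =
      ENNReal.ofReal (beta p p * Gamma (2 * p + e)) := by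
  have hΓ := setLIntegral_rpow_mul_exp_neg_mul he one_pos
  have hβ := beta_pos hp hp
  simp only [one_mul, one_rpow, mul_one] at hΓ
  rw [ENNReal.ofReal_mul hβ.le, ← hΓ]
  trans ∫⁻ u in Ioi 0, ∫⁻ v in Ioi 0,
      ENNReal.ofReal (u ^ (p - 1) * v ^ (p - 1) * ((u + v) ^ e * exp (-(u + v))))
  · refine setLIntegral_congr_fun measurableSet_Ioi fun u (hu : 0 < u) =>
      setLIntegral_congr_fun measurableSet_Ioi fun v (hv : 0 < v) => ?_
    rw [mul_rpow hu.le hv.le]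
  · rw [setLIntegral_rpow_mul_rpow_mul_comp_add hp hp
      (g := fun T => T ^ e * exp (-T)) (by fun_prop)]
    congr 1
    refine setLIntegral_congr_fun measurableSet_Ioi fun T (hT : 0 < T) => ?_
    rw [← mul_assoc, ← rpow_add hT]
    ring_nf

/- Write `(S + T) ^ (-(p + q))` as a Gamma integral and integrate in `T` first. -/
theorem setLIntegral_rpow_mul_add_rpow_neg {p q S : ℝ} (hp : 0 < p) (hq : 0 < q) (hS : 0 < S) :
    ∫⁻ T in Ioi 0, ENNReal.ofReal (T ^ (p - 1) * (S + T) ^ (-(p + q))) =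
      ENNReal.ofReal (beta p q * S ^ (-q)) := by
  have hΓp := Gamma_pos_of_pos hp
  have hΓpq := Gamma_pos_of_pos (add_pos hp hq)
  have inner_r : ∀ T ∈ Ioi (0 : ℝ), ∫⁻ r in Ioi 0,
      ENNReal.ofReal (T ^ (p - 1) * (r ^ (p + q - 1) * exp (-((S + T) * r)))) =
      ENNReal.ofReal (Gamma (p + q) * (T ^ (p - 1) * (S + T) ^ (-(p + q)))) := by
    intro T (hT : 0 < T)
    rw [lintegral_ofReal_const_mul (by positivity),
      setLIntegral_rpow_mul_exp_neg_mul (add_pos hp hq) (add_pos hS hT),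
      ← ENNReal.ofReal_mul (by positivity), mul_left_comm]
  have inner_T : ∀ r ∈ Ioi (0 : ℝ), ∫⁻ T in Ioi 0,
      ENNReal.ofReal (T ^ (p - 1) * (r ^ (p + q - 1) * exp (-((S + T) * r)))) =
      ENNReal.ofReal (Gamma p * (r ^ (q - 1) * exp (-(S * r)))) := by
    intro r (hr : 0 < r)
    have hsplit (T : ℝ) : T ^ (p - 1) * (r ^ (p + q - 1) * exp (-((S + T) * r))) =
        r ^ (p + q - 1) * exp (-(S * r)) * (T ^ (p - 1) * exp (-(r * T))) := by
      rw [show -((S + T) * r) = -(S * r) + -(r * T) by ring, exp_add]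
      ring
    simp_rw [hsplit]
    rw [lintegral_ofReal_const_mul (by positivity), setLIntegral_rpow_mul_exp_neg_mul hp hr,
      ← ENNReal.ofReal_mul (by positivity), show q - 1 = p + q - 1 + -p by ring, rpow_add hr]
    ring_nf
  have hswap := lintegral_lintegral_swap
    (μ := volume.restrict (Ioi (0 : ℝ))) (ν := volume.restrict (Ioi (0 : ℝ)))
    (f := fun T r => ENNReal.ofReal (T ^ (p - 1) * (r ^ (p + q - 1) * exp (-((S + T) * r)))))
    (by fun_prop)
  rw [setLIntegral_congr_fun measurableSet_Ioi inner_r, lintegral_ofReal_const_mul hΓpq.le,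
    setLIntegral_congr_fun measurableSet_Ioi inner_T, lintegral_ofReal_const_mul hΓp.le,
    setLIntegral_rpow_mul_exp_neg_mul hq hS, ← ENNReal.ofReal_mul hΓp.le] at hswap
  rw [← ENNReal.mul_right_inj (ENNReal.ofReal_pos.2 hΓpq).ne' ENNReal.ofReal_ne_top, hswap,
    ← ENNReal.ofReal_mul hΓpq.le, beta]
  field_simp

theorem setLIntegral_Ioo_add_mul_add_sub {a b T : ℝ} (ha : 0 ≤ a) (hb : 0 ≤ b) (hT : 0 ≤ T) :
    ∫⁻ u in Ioo 0 T, ENNReal.ofReal ((a + u) * (b + (T - u))) =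
      ENNReal.ofReal (a * b * T + (a + b) * T ^ 2 / 2 + T ^ 3 / 6) := by
  have hderiv (u : ℝ) : HasDerivAt
      (fun u => a * (b + T) * u + (b + T - a) * u ^ 2 / 2 - u ^ 3 / 3)
      ((a + u) * (b + (T - u))) u := by
    refine (((hasDerivAt_id u).const_mul _).add
      ((((hasDerivAt_pow 2 u).const_mul _).div_const 2))).sub ((hasDerivAt_pow 3 u).div_const 3)
      |>.congr_deriv ?_
    simp
    ring
  have hcont : Continuous fun u => (a + u) * (b + (T - u)) := by fun_prop
  rw [setLIntegral_congr Ioo_ae_eq_Ioc,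
    ← ofReal_integral_eq_lintegral_ofReal (hcont.integrableOn_Ioc) ?_,
    ← intervalIntegral.integral_of_le hT,
    intervalIntegral.integral_eq_sub_of_hasDerivAt (fun u _ => hderiv u)
      (hcont.intervalIntegrable _ _)]
  · ring_nf
  · filter_upwards [ae_restrict_mem measurableSet_Ioc] with u hu
    have : 0 ≤ T - u := sub_nonneg.2 hu.2
    have : 0 ≤ u := hu.1.le
    positivity

theorem setLIntegral_add_mul_add_mul_comp_add {a b : ℝ} (ha : 0 ≤ a) (hb : 0 ≤ b) {g : ℝ → ℝ}
    (hg : Measurable g) (hg₀ : ∀ T, 0 < T → 0 ≤ g T) :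
    ∫⁻ u in Ioi 0, ∫⁻ v in Ioi 0, ENNReal.ofReal ((a + u) * (b + v) * g (u + v)) =
      ENNReal.ofReal (a * b) * (∫⁻ T in Ioi 0, ENNReal.ofReal (T * g T)) +
        ENNReal.ofReal ((a + b) / 2) * (∫⁻ T in Ioi 0, ENNReal.ofReal (T ^ 2 * g T)) +
        ENNReal.ofReal (1 / 6) * ∫⁻ T in Ioi 0, ENNReal.ofReal (T ^ 3 * g T) := by
  rw [setLIntegral_Ioi_Ioi_eq_setLIntegral_Ioi_Ioo (by fun_prop),
    ← lintegral_ofReal_const_mul (by positivity), ← lintegral_ofReal_const_mul (by positivity),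
    ← lintegral_ofReal_const_mul (by positivity), ← lintegral_add_left (by fun_prop),
    ← lintegral_add_left (by fun_prop)]
  refine setLIntegral_congr_fun measurableSet_Ioi fun T (hT : 0 < T) => ?_
  have hgT := hg₀ T hT
  simp only [add_sub_cancel, mul_comm _ (g T)]
  rw [lintegral_ofReal_const_mul hgT, setLIntegral_Ioo_add_mul_add_sub ha hb hT.le,
    ← ENNReal.ofReal_mul hgT, ← ENNReal.ofReal_add (by positivity) (by positivity),
    ← ENNReal.ofReal_add (by positivity) (by positivity)]
  ring_nf

theorem setLIntegral_pow_mul_const_mul_rpow_neg_mul_add_rpow_neg {c p q r k S : ℝ} (i : ℕ)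
    (hc : 0 ≤ c) (hp : 0 < p) (hq : 0 < q) (hS : 0 < S) (hr : p = i + 1 - r) (hk : p + q = k) :
    ∫⁻ T in Ioi 0, ENNReal.ofReal (T ^ i * (c * (T ^ (-r) * (S + T) ^ (-k)))) =
      ENNReal.ofReal (c * (beta p q * S ^ (-q))) := by
  rw [ENNReal.ofReal_mul hc, ← setLIntegral_rpow_mul_add_rpow_neg hp hq hS, hk,
    ← lintegral_ofReal_const_mul hc]
  refine setLIntegral_congr_fun measurableSet_Ioi fun T (hT : 0 < T) => congrArg _ ?_
  rw [mul_left_comm, ← mul_assoc (T ^ i), ← rpow_natCast, ← rpow_add hT,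
    show (i : ℝ) + -r = p - 1 by rw [hr]; ring]

theorem beta_add_one_left {p q : ℝ} (hp : 0 < p) (hq : 0 < q) :
    beta (p + 1) q = p / (p + q) * beta p q := by
  have hpq : 0 < p + q := add_pos hp hq
  rw [beta, beta, add_right_comm, Gamma_add_one hp.ne', Gamma_add_one hpq.ne']
  field_simp

theorem beta_comm (p q : ℝ) : beta p q = beta q p := by
  rw [beta, beta, mul_comm, add_comm]

theorem beta_add_one_right {p q : ℝ} (hp : 0 < p) (hq : 0 < q) :
    beta p (q + 1) = q / (p + q) * beta p q := by
  rw [beta_comm, beta_add_one_left hq hp, beta_comm q, add_comm]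

end BetaIntegrals

section HeatKernel

variable {V : Type*} [NormedAddCommGroup V] [InnerProductSpace ℝ V]

/-- The centred Gaussian probability density on `V` with covariance `τ / 2`, that is, the heat
kernel at time `τ / 4`. This time scale removes all factors `4` from the exponents. -/
noncomputable def heatKernel (τ : ℝ) (x : V) : ℝ :=
  (π * τ) ^ (-(finrank ℝ V / 2 : ℝ)) * exp (-(‖x‖ ^ 2 / τ))

theorem heatKernel_nonneg {τ : ℝ} (hτ : 0 ≤ τ) (x : V) : 0 ≤ heatKernel τ x := by
  unfold heatKernel
  positivity

@[fun_prop]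
theorem measurable_heatKernel [MeasurableSpace V] [BorelSpace V] {α : Type*} [MeasurableSpace α]
    {τ : α → ℝ} {x : α → V} (hτ : Measurable τ) (hx : Measurable x) :
    Measurable fun a => heatKernel (τ a) (x a) := by
  unfold heatKernel
  fun_prop

-- Completing the square in `‖x - ξ‖² / σ + ‖ξ‖² / τ` gives the semigroup law before integration.
theorem heatKernel_sub_mul_heatKernel {σ τ : ℝ} (hσ : 0 < σ) (hτ : 0 < τ) (x ξ : V) :
    heatKernel σ (x - ξ) * heatKernel τ ξ =
      heatKernel (σ + τ) x * heatKernel (σ * τ / (σ + τ)) (ξ - (τ / (σ + τ)) • x) := by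
  have hscale : π * σ * (π * τ) = π * (σ + τ) * (π * (σ * τ / (σ + τ))) := by field_simp
  have hsquare : ‖x - ξ‖ ^ 2 / σ + ‖ξ‖ ^ 2 / τ = ‖x‖ ^ 2 / (σ + τ) +
      ‖ξ - (τ / (σ + τ)) • x‖ ^ 2 / (σ * τ / (σ + τ)) := by
    rw [norm_sub_sq_real, norm_sub_sq_real, norm_smul, inner_smul_right, real_inner_comm,
      norm_of_nonneg (by positivity)]
    field_simp
    ring
  simp only [heatKernel]
  rw [mul_mul_mul_comm ((π * σ) ^ _), mul_mul_mul_comm ((π * (σ + τ)) ^ _),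
    ← mul_rpow (by positivity) (by positivity), ← mul_rpow (by positivity) (by positivity),
    ← exp_add, ← exp_add, ← neg_add, ← neg_add,
    hscale, hsquare]

variable [FiniteDimensional ℝ V] [MeasurableSpace V] [BorelSpace V]

theorem lintegral_heatKernel {τ : ℝ} (hτ : 0 < τ) :
    ∫⁻ x : V, ENNReal.ofReal (heatKernel τ x) = 1 := by
  rw [← ENNReal.ofReal_one]
  refine lintegral_ofReal_eq_of_integral_eq (.of_forall (heatKernel_nonneg hτ.le)) one_pos ?_
  have hgauss := GaussianFourier.integral_rexp_neg_mul_sq_norm (V := V) (inv_pos.2 hτ)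
  simp only [neg_mul, inv_mul_eq_div, div_inv_eq_mul] at hgauss
  simp only [heatKernel, integral_const_mul, hgauss]
  rw [← rpow_add (by positivity), neg_add_cancel, rpow_zero]

theorem lintegral_heatKernel_sub_mul_heatKernel {σ τ : ℝ} (hσ : 0 < σ) (hτ : 0 < τ) (x : V) :
    ∫⁻ ξ, ENNReal.ofReal (heatKernel σ (x - ξ) * heatKernel τ ξ) =
      ENNReal.ofReal (heatKernel (σ + τ) x) := by
  simp_rw [heatKernel_sub_mul_heatKernel hσ hτ]
  rw [lintegral_ofReal_const_mul (heatKernel_nonneg (by positivity) x),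
    lintegral_sub_right_eq_self (fun ξ : V => ENNReal.ofReal (heatKernel (σ * τ / (σ + τ)) ξ)),
    lintegral_heatKernel (by positivity), mul_one]

theorem integral_prod_inner_orthonormalBasis {ι : Type*} [Fintype ι] (b : OrthonormalBasis ι ℝ V)
    (f : ι → ℝ → ℝ) : ∫ x : V, ∏ i, f i (inner ℝ (b i) x) = ∏ i, ∫ t, f i t := by
  rw [← integral_fintype_prod_volume_eq_prod,
    ← (EuclideanSpace.volume_preserving_symm_measurableEquiv_toLp ι).integral_comp',
    ← b.measurePreserving_repr.integral_comp b.repr.toHomeomorph.measurableEmbedding]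
  simp [b.repr_apply_apply]

theorem integral_exp_neg_sq_div_mul_even_pow {τ : ℝ} (hτ : 0 < τ) (j : ℕ) :
    ∫ t : ℝ, exp (-(t ^ 2 / τ)) * t ^ (2 * j) =
      Gamma (j + 1 / 2) / √π * τ ^ j * (π * τ) ^ (1 / 2 : ℝ) := by
  have habs := integral_comp_abs (f := fun t : ℝ => exp (-(t ^ 2 / τ)) * t ^ (2 * j))
  have hgamma := integral_rpow_mul_exp_neg_mul_rpow (p := 2) (q := 2 * j) (b := τ⁻¹) two_pos
    (neg_one_lt_zero.trans_le (by positivity)) (inv_pos.2 hτ)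
  have hexponent : -(2 * (j : ℝ) + 1) / 2 = -(j + 1 / 2) := by ring
  have hΓ : (2 * (j : ℝ) + 1) / 2 = j + 1 / 2 := by ring
  have hcast (t : ℝ) : t ^ (2 * (j : ℝ)) = t ^ (2 * j) := by
    rw [← rpow_natCast]
    norm_cast
  simp only [rpow_two, neg_mul, inv_mul_eq_div, hexponent, hΓ, hcast] at hgamma
  simp only [(even_two_mul j).pow_abs, sq_abs] at habs
  simp_rw [habs, mul_comm (exp _), hgamma]
  rw [inv_rpow hτ.le, rpow_neg hτ.le, inv_inv, rpow_add hτ, rpow_natCast,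
    mul_rpow pi_pos.le hτ.le, sqrt_eq_rpow]
  field_simp

theorem integral_exp_neg_norm_sq_div_mul_inner_pow {e : V} (he : ‖e‖ = 1) {τ : ℝ} (hτ : 0 < τ)
    (j : ℕ) :
    ∫ x : V, exp (-(‖x‖ ^ 2 / τ)) * inner ℝ e x ^ (2 * j) =
      Gamma (j + 1 / 2) / √π * τ ^ j * (π * τ) ^ (finrank ℝ V / 2 : ℝ) := by
  classical
  have he' : Orthonormal ℝ ((↑) : ({e} : Set V) → V) :=
    orthonormal_subsingleton_iff.2 (by simpa using he)
  obtain ⟨u, b, heu, hb⟩ := he'.exists_orthonormalBasis_extension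
  let i₀ : u := ⟨e, heu rfl⟩
  have hb₀ : b i₀ = e := congrFun hb i₀
  let f : u → ℝ → ℝ := fun i t => exp (-(t ^ 2 / τ)) * if i = i₀ then t ^ (2 * j) else 1
  have hfactor (x : V) :
      exp (-(‖x‖ ^ 2 / τ)) * inner ℝ e x ^ (2 * j) = ∏ i, f i (inner ℝ (b i) x) := by
    rw [Finset.prod_mul_distrib, ← exp_sum, Finset.prod_ite_eq' Finset.univ i₀,
      Finset.sum_neg_distrib, ← Finset.sum_div]
    simp [hb₀, ← b.sum_sq_norm_inner_right]
  have hfactor_integral (i : u) :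
      ∫ t, f i t = (if i = i₀ then Gamma (j + 1 / 2) / √π * τ ^ j else 1) *
        (π * τ) ^ (1 / 2 : ℝ) := by
    simp only [f]
    split_ifs
    · exact integral_exp_neg_sq_div_mul_even_pow hτ j
    · simpa [← one_div, Gamma_one_half_eq, (sqrt_pos.2 pi_pos).ne']
        using integral_exp_neg_sq_div_mul_even_pow hτ 0
  simp_rw [hfactor, integral_prod_inner_orthonormalBasis, hfactor_integral]
  rw [Finset.prod_mul_distrib, Finset.prod_ite_eq' Finset.univ i₀, if_pos (Finset.mem_univ i₀),
    Finset.prod_const, Finset.card_univ, ← Module.finrank_eq_card_basis b.toBasis,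
    ← rpow_mul_natCast (by positivity), one_div_mul_eq_div]

theorem lintegral_heatKernel_mul_inner_pow {e : V} (he : ‖e‖ = 1) {τ : ℝ} (hτ : 0 < τ) (j : ℕ) :
    ∫⁻ x : V, ENNReal.ofReal (heatKernel τ x * inner ℝ e x ^ (2 * j)) =
      ENNReal.ofReal (Gamma (j + 1 / 2) / √π * τ ^ j) := by
  refine lintegral_ofReal_eq_of_integral_eq (.of_forall fun x => ?_) (by positivity) ?_
  · exact mul_nonneg (heatKernel_nonneg hτ.le x) ((even_two_mul j).pow_nonneg _)
  · simp only [heatKernel, mul_assoc, integral_const_mul]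
    rw [integral_exp_neg_norm_sq_div_mul_inner_pow he hτ, mul_left_comm,
      ← rpow_add (by positivity), neg_add_cancel, rpow_zero, mul_one]

theorem lintegral_heatKernel_mul_heatKernel_mul_inner_pow {e : V} (he : ‖e‖ = 1) {σ τ : ℝ}
    (hσ : 0 < σ) (hτ : 0 < τ) (j : ℕ) :
    ∫⁻ x : V, ENNReal.ofReal (heatKernel σ x * heatKernel τ x * inner ℝ e x ^ (2 * j)) =
      ENNReal.ofReal (Gamma (j + 1 / 2) / √π * π ^ (-(finrank ℝ V / 2 : ℝ)) *
        ((σ * τ) ^ j * (σ + τ) ^ (-(finrank ℝ V / 2 + j : ℝ)))) := by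
  have hproduct (x : V) : heatKernel σ x * heatKernel τ x =
      (π * (σ + τ)) ^ (-(finrank ℝ V / 2 : ℝ)) * heatKernel (σ * τ / (σ + τ)) x := by
    simpa [heatKernel] using heatKernel_sub_mul_heatKernel hσ hτ 0 x
  simp_rw [hproduct, mul_assoc]
  rw [lintegral_ofReal_const_mul (by positivity),
    lintegral_heatKernel_mul_inner_pow he (by positivity), ← ENNReal.ofReal_mul (by positivity),
    mul_rpow pi_pos.le (by positivity), neg_add, rpow_add (by positivity),
    rpow_neg (by positivity : 0 ≤ σ + τ) j, rpow_natCast, div_pow]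
  ring_nf

end HeatKernel

section Subordination

variable {V : Type*} [NormedAddCommGroup V] [InnerProductSpace ℝ V]

/-- The Poisson kernel of the Caffarelli–Silvestre extension for `(-Δ) ^ γ` on `V`, without its
normalising constant. -/
noncomputable def poissonKernel (γ : ℝ) (x : V) (y : ℝ) : ℝ :=
  y ^ (2 * γ) * (‖x‖ ^ 2 + y ^ 2) ^ (-((finrank ℝ V + 2 * γ) / 2))

/-- The standard bubble, the extremal of the fractional Sobolev inequality of order `γ` on `V`. -/
noncomputable def bubble (γ : ℝ) (x : V) : ℝ :=
  (1 + ‖x‖ ^ 2) ^ (-((finrank ℝ V - 2 * γ) / 2))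

/-- The (unnormalised) Caffarelli–Silvestre extension of the standard bubble to `V × (0, ∞)`. -/
noncomputable def bubbleExtension [MeasurableSpace V] [BorelSpace V] [FiniteDimensional ℝ V]
    (γ : ℝ) (x : V) (y : ℝ) : ℝ :=
  ∫ ξ, poissonKernel γ (x - ξ) y * bubble γ ξ

/-- The weight of the heat kernel at time `t` in the Poisson kernel at height `y`. -/
noncomputable def poissonWeight (γ y t : ℝ) : ℝ :=
  y ^ (2 * γ) * (t ^ (-γ - 1) * exp (-(y ^ 2 / t)))

/-- The weight of the heat kernel at time `s⁻¹` in the standard bubble. -/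
noncomputable def bubbleWeight (γ s : ℝ) : ℝ :=
  s ^ (-γ - 1) * exp (-s)

/-- The contribution of the heat kernels at times `s⁻¹` (from the bubble) and `t` (from the Poisson
kernel) to the extension of the bubble at `(x, y)`. -/
noncomputable def bubbleMode (γ s t : ℝ) (x : V) (y : ℝ) : ℝ :=
  bubbleWeight γ s * poissonWeight γ y t * heatKernel (t + s⁻¹) x

theorem poissonWeight_nonneg (γ : ℝ) {y t : ℝ} (hy : 0 ≤ y) (ht : 0 ≤ t) :
    0 ≤ poissonWeight γ y t := by
  unfold poissonWeight
  positivity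

theorem bubbleWeight_nonneg (γ : ℝ) {s : ℝ} (hs : 0 ≤ s) : 0 ≤ bubbleWeight γ s := by
  unfold bubbleWeight
  positivity

theorem poissonKernel_nonneg (γ : ℝ) (x : V) {y : ℝ} (hy : 0 ≤ y) : 0 ≤ poissonKernel γ x y := by
  unfold poissonKernel
  positivity

theorem bubble_nonneg (γ : ℝ) (x : V) : 0 ≤ bubble γ x := by
  unfold bubble
  positivity

theorem bubble_le_one {γ : ℝ} (hγ : 2 * γ ≤ finrank ℝ V) (x : V) : bubble γ x ≤ 1 :=
  rpow_le_one_of_one_le_of_nonpos (le_add_of_nonneg_right (sq_nonneg _)) (by linarith)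

theorem ofReal_poissonKernel {γ : ℝ} (hγ : 0 < finrank ℝ V + 2 * γ) (x : V) {y : ℝ} (hy : 0 < y) :
    ENNReal.ofReal (poissonKernel γ x y) =
      ENNReal.ofReal (π ^ (finrank ℝ V / 2 : ℝ) / Gamma ((finrank ℝ V + 2 * γ) / 2)) *
        ∫⁻ t in Ioi 0, ENNReal.ofReal (poissonWeight γ y t * heatKernel t x) := by
  set q : ℝ := (finrank ℝ V + 2 * γ) / 2 with hq
  have hΓ : 0 < Gamma q := Gamma_pos_of_pos (by positivity)
  have hintegrand : ∀ t ∈ Ioi (0 : ℝ), poissonWeight γ y t * heatKernel t x =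
      y ^ (2 * γ) * π ^ (-(finrank ℝ V / 2 : ℝ)) *
        (t ^ (-q - 1) * exp (-((‖x‖ ^ 2 + y ^ 2) / t))) := by
    intro t (ht : 0 < t)
    rw [poissonWeight, heatKernel, mul_rpow pi_pos.le ht.le, add_div, neg_add, exp_add,
      show -q - 1 = -γ - 1 + -(finrank ℝ V / 2 : ℝ) by rw [hq]; ring, rpow_add ht]
    ring
  rw [setLIntegral_congr_fun measurableSet_Ioi fun t ht => congrArg _ (hintegrand t ht),
    lintegral_ofReal_const_mul (by positivity),
    setLIntegral_rpow_neg_mul_exp_neg_div (by positivity) (by positivity),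
    ← ENNReal.ofReal_mul (by positivity), ← ENNReal.ofReal_mul (by positivity), poissonKernel, ← hq,
    rpow_neg pi_pos.le]
  congr 1
  field_simp

theorem ofReal_bubble {γ : ℝ} (hγ : 2 * γ < finrank ℝ V) (x : V) :
    ENNReal.ofReal (bubble γ x) =
      ENNReal.ofReal (π ^ (finrank ℝ V / 2 : ℝ) / Gamma ((finrank ℝ V - 2 * γ) / 2)) *
        ∫⁻ s in Ioi 0, ENNReal.ofReal (bubbleWeight γ s * heatKernel s⁻¹ x) := by
  set p : ℝ := (finrank ℝ V - 2 * γ) / 2 with hp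
  have hp₀ : 0 < p := by linarith
  have hintegrand : ∀ s ∈ Ioi (0 : ℝ), bubbleWeight γ s * heatKernel s⁻¹ x =
      π ^ (-(finrank ℝ V / 2 : ℝ)) * (s ^ (p - 1) * exp (-((1 + ‖x‖ ^ 2) * s))) := by
    intro s (hs : 0 < s)
    rw [bubbleWeight, heatKernel, mul_rpow pi_pos.le (inv_pos.2 hs).le, inv_rpow hs.le,
      ← rpow_neg hs.le, neg_neg, add_mul, one_mul, neg_add, exp_add, div_inv_eq_mul,
      show p - 1 = -γ - 1 + finrank ℝ V / 2 by rw [hp]; ring, rpow_add hs]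
    ring
  rw [setLIntegral_congr_fun measurableSet_Ioi fun s hs => congrArg _ (hintegrand s hs),
    lintegral_ofReal_const_mul (by positivity),
    setLIntegral_rpow_mul_exp_neg_mul hp₀ (by positivity),
    ← ENNReal.ofReal_mul (by positivity), ← ENNReal.ofReal_mul (by positivity), bubble, ← hp,
    rpow_neg pi_pos.le]
  congr 1
  field_simp

theorem bubbleMode_nonneg (γ : ℝ) {s t : ℝ} (hs : 0 ≤ s) (ht : 0 ≤ t) (x : V) {y : ℝ}
    (hy : 0 ≤ y) : 0 ≤ bubbleMode γ s t x y :=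
  mul_nonneg (mul_nonneg (bubbleWeight_nonneg γ hs) (poissonWeight_nonneg γ hy ht))
    (heatKernel_nonneg (by positivity) x)

@[fun_prop]
theorem measurable_bubbleMode [MeasurableSpace V] [BorelSpace V] {α : Type*} [MeasurableSpace α]
    {γ : ℝ} {s t y : α → ℝ} {x : α → V} (hs : Measurable s) (ht : Measurable t)
    (hx : Measurable x) (hy : Measurable y) :
    Measurable fun a => bubbleMode γ (s a) (t a) (x a) (y a) := by
  unfold bubbleMode bubbleWeight poissonWeight
  fun_prop

variable [FiniteDimensional ℝ V] [MeasurableSpace V] [BorelSpace V]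

theorem bubbleExtension_nonneg (γ : ℝ) (x : V) {y : ℝ} (hy : 0 ≤ y) :
    0 ≤ bubbleExtension γ x y :=
  integral_nonneg fun ξ => mul_nonneg (poissonKernel_nonneg γ _ hy) (bubble_nonneg γ ξ)

theorem measurable_bubbleExtension (γ : ℝ) :
    Measurable fun z : ℝ × V => bubbleExtension γ z.2 z.1 := by
  refine (StronglyMeasurable.integral_prod_right' (f := fun p : (ℝ × V) × V =>
    poissonKernel γ (p.1.2 - p.2) p.1.1 * bubble γ p.2) ?_).measurable
  unfold poissonKernel bubble
  exact Measurable.stronglyMeasurable (by fun_prop)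

theorem integrable_poissonKernel {γ : ℝ} (hγ : 0 < γ) {y : ℝ} (hy : 0 < y) :
    Integrable fun x : V => poissonKernel γ x y := by
  have hjapanese := integrable_rpow_neg_one_add_norm_sq (E := V) (μ := volume)
    (r := finrank ℝ V + 2 * γ) (by linarith)
  refine ((hjapanese.comp_smul (inv_pos.2 hy).ne').const_mul
    (y ^ (2 * γ) * (y ^ 2) ^ (-((finrank ℝ V + 2 * γ) / 2)))).congr (.of_forall fun x => ?_)
  simp only [poissonKernel, neg_div]
  rw [mul_assoc, ← mul_rpow (by positivity) (by positivity), norm_smul,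
    norm_of_nonneg (inv_pos.2 hy).le]
  congr 2
  field_simp
  ring

theorem integrable_poissonKernel_mul_bubble {γ : ℝ} (hγ : 0 < γ) (hd : 2 * γ ≤ finrank ℝ V) (x : V)
    {y : ℝ} (hy : 0 < y) : Integrable fun ξ => poissonKernel γ (x - ξ) y * bubble γ ξ := by
  refine ((integrable_poissonKernel hγ hy).comp_sub_left x).mul_bdd (c := 1) ?_
    (.of_forall fun ξ => ?_)
  · unfold bubble
    exact Measurable.aestronglyMeasurable (by fun_prop)
  · rw [norm_of_nonneg (bubble_nonneg γ ξ)]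
    exact bubble_le_one hd ξ

theorem lintegral_weighted_heatKernel_mul_weighted_heatKernel_sub {γ s t y : ℝ} (hs : 0 < s)
    (ht : 0 < t) (hy : 0 < y) (x : V) :
    ∫⁻ ξ, ENNReal.ofReal (bubbleWeight γ s * heatKernel s⁻¹ ξ) *
        ENNReal.ofReal (poissonWeight γ y t * heatKernel t (x - ξ)) =
      ENNReal.ofReal (bubbleMode γ s t x y) := by
  have hws := bubbleWeight_nonneg γ hs.le
  have hwt := poissonWeight_nonneg γ hy.le ht.le
  rw [bubbleMode, ENNReal.ofReal_mul (mul_nonneg hws hwt),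
    ← lintegral_heatKernel_sub_mul_heatKernel ht (inv_pos.2 hs),
    ← lintegral_ofReal_const_mul (mul_nonneg hws hwt)]
  refine lintegral_congr fun ξ => ?_
  rw [← ENNReal.ofReal_mul (mul_nonneg hws (heatKernel_nonneg (inv_pos.2 hs).le ξ))]
  ring_nf

/-- The constant relating the extension of the bubble to the superposition of its modes. -/
noncomputable def subordinationConst (γ d : ℝ) : ℝ :=
  π ^ d / (Gamma ((d - 2 * γ) / 2) * Gamma ((d + 2 * γ) / 2))

theorem subordinationConst_pos {γ d : ℝ} (hγ : 0 < γ) (hd : 2 * γ < d) :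
    0 < subordinationConst γ d := by
  have hd₀ : 0 < d := by linarith
  unfold subordinationConst
  positivity

theorem ofReal_bubbleExtension {γ : ℝ} (hγ : 0 < γ) (hd : 2 * γ < finrank ℝ V) (x : V) {y : ℝ}
    (hy : 0 < y) :
    ENNReal.ofReal (bubbleExtension γ x y) =
      ENNReal.ofReal (subordinationConst γ (finrank ℝ V)) *
        ∫⁻ s in Ioi 0, ∫⁻ t in Ioi 0, ENNReal.ofReal (bubbleMode γ s t x y) := by
  have hconst : subordinationConst γ (finrank ℝ V) =
      π ^ (finrank ℝ V / 2 : ℝ) / Gamma ((finrank ℝ V - 2 * γ) / 2) *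
        (π ^ (finrank ℝ V / 2 : ℝ) / Gamma ((finrank ℝ V + 2 * γ) / 2)) := by
    rw [subordinationConst, div_mul_div_comm, ← rpow_add pi_pos, add_halves]
  rw [bubbleExtension, ofReal_integral_eq_lintegral_ofReal
    (integrable_poissonKernel_mul_bubble hγ hd.le x hy)
    (.of_forall fun ξ => mul_nonneg (poissonKernel_nonneg γ _ hy.le) (bubble_nonneg γ ξ))]
  calc ∫⁻ ξ, ENNReal.ofReal (poissonKernel γ (x - ξ) y * bubble γ ξ)
      = ∫⁻ ξ, ENNReal.ofReal (subordinationConst γ (finrank ℝ V)) *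
          ((∫⁻ s in Ioi 0, ENNReal.ofReal (bubbleWeight γ s * heatKernel s⁻¹ ξ)) *
            ∫⁻ t in Ioi 0, ENNReal.ofReal (poissonWeight γ y t * heatKernel t (x - ξ))) := by
        refine lintegral_congr fun ξ => ?_
        rw [mul_comm, ENNReal.ofReal_mul (bubble_nonneg γ ξ), ofReal_bubble hd,
          ofReal_poissonKernel (by positivity) _ hy, hconst, ENNReal.ofReal_mul (by positivity)]
        exact mul_mul_mul_comm _ _ _ _
    _ = ENNReal.ofReal (subordinationConst γ (finrank ℝ V)) *
          ∫⁻ s in Ioi 0, ∫⁻ t in Ioi 0, ∫⁻ ξ,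
            ENNReal.ofReal (bubbleWeight γ s * heatKernel s⁻¹ ξ) *
              ENNReal.ofReal (poissonWeight γ y t * heatKernel t (x - ξ)) := by
        rw [lintegral_const_mul' _ _ ENNReal.ofReal_ne_top, lintegral_mul_lintegral_swap]
        · unfold bubbleWeight
          fun_prop
        · unfold poissonWeight
          fun_prop
    _ = _ := by
        congr 1
        exact setLIntegral_congr_fun measurableSet_Ioi fun s hs =>
          setLIntegral_congr_fun measurableSet_Ioi fun t ht =>
            lintegral_weighted_heatKernel_mul_weighted_heatKernel_sub hs ht hy x

end Subordination

section WeightedNorm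

theorem setLIntegral_rpow_mul_poissonWeight_mul_poissonWeight {γ m t t' : ℝ} (hm : 0 < m)
    (ht : 0 < t) (ht' : 0 < t') :
    ∫⁻ y in Ioi 0, ENNReal.ofReal
        (y ^ (2 * m - 1 - 4 * γ) * (poissonWeight γ y t * poissonWeight γ y t')) =
      ENNReal.ofReal (Gamma m / 2 * ((t * t') ^ (m - γ - 1) * (t + t') ^ (-m))) := by
  have hintegrand : ∀ y ∈ Ioi (0 : ℝ),
      y ^ (2 * m - 1 - 4 * γ) * (poissonWeight γ y t * poissonWeight γ y t') =
        (t * t') ^ (-γ - 1) * (y ^ (2 * m - 1) * exp (-((t + t') / (t * t') * y ^ 2))) := by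
    intro y (hy : 0 < y)
    have hrpow : y ^ (2 * m - 1) = y ^ (2 * m - 1 - 4 * γ) * (y ^ (2 * γ) * y ^ (2 * γ)) := by
      rw [← rpow_add hy, ← rpow_add hy]
      ring_nf
    have hexp : exp (-((t + t') / (t * t') * y ^ 2)) =
        exp (-(y ^ 2 / t)) * exp (-(y ^ 2 / t')) := by
      rw [← exp_add]
      congr 1
      field_simp
      ring
    rw [poissonWeight, poissonWeight, mul_rpow ht.le ht'.le, hrpow, hexp]
    ring
  rw [setLIntegral_congr_fun measurableSet_Ioi fun y hy => congrArg _ (hintegrand y hy),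
    lintegral_ofReal_const_mul (by positivity),
    setLIntegral_rpow_mul_exp_neg_mul_sq hm (by positivity), ← ENNReal.ofReal_mul (by positivity),
    div_rpow (by positivity) (by positivity), rpow_neg (mul_pos ht ht').le m,
    show m - γ - 1 = -γ - 1 + m by ring, rpow_add (mul_pos ht ht')]
  congr 1
  field_simp

/-- The inner product of two modes of the bubble in the space weighted by
`y ^ (2 * m - 1 - 4 * γ) * ⟪e, x⟫ ^ (2 * j)`, without its numerical constant; `M` is half the
dimension. -/
noncomputable def modeInteraction (γ M m : ℝ) (j : ℕ) (s s' t t' : ℝ) : ℝ :=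
  bubbleWeight γ s * bubbleWeight γ s' * ((t * t') ^ (m - γ - 1) * (t + t') ^ (-m) *
    (((t + s⁻¹) * (t' + s'⁻¹)) ^ j * (t + s⁻¹ + (t' + s'⁻¹)) ^ (-(M + j))))

/-- The numerical constant in the inner product of two modes of the bubble; `M` is half the
dimension. -/
noncomputable def momentConst (M m : ℝ) (j : ℕ) : ℝ :=
  Gamma m / 2 * (Gamma (j + 1 / 2) / √π * π ^ (-M))

theorem momentConst_pos {M m : ℝ} (hm : 0 < m) (j : ℕ) : 0 < momentConst M m j := by
  unfold momentConst
  positivity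

variable {V : Type*} [NormedAddCommGroup V] [InnerProductSpace ℝ V] [FiniteDimensional ℝ V]
  [MeasurableSpace V] [BorelSpace V]

theorem lintegral_weight_mul_bubbleMode_mul_bubbleMode {γ m : ℝ} (hm : 0 < m) {e : V}
    (he : ‖e‖ = 1) (j : ℕ) {s s' t t' : ℝ} (hs : 0 < s) (hs' : 0 < s') (ht : 0 < t)
    (ht' : 0 < t') :
    ∫⁻ z : ℝ × V in Ioi 0 ×ˢ univ, ENNReal.ofReal (z.1 ^ (2 * m - 1 - 4 * γ) *
        inner ℝ e z.2 ^ (2 * j) * (bubbleMode γ s t z.2 z.1 * bubbleMode γ s' t' z.2 z.1)) =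
      ENNReal.ofReal (momentConst (finrank ℝ V / 2) m j *
        modeInteraction γ (finrank ℝ V / 2) m j s s' t t') := by
  have hb : 0 ≤ bubbleWeight γ s * bubbleWeight γ s' :=
    mul_nonneg (bubbleWeight_nonneg γ hs.le) (bubbleWeight_nonneg γ hs'.le)
  have hfactor : ∀ y ∈ Ioi (0 : ℝ), ∫⁻ x : V, ENNReal.ofReal (y ^ (2 * m - 1 - 4 * γ) *
      inner ℝ e x ^ (2 * j) * (bubbleMode γ s t x y * bubbleMode γ s' t' x y)) =
      ENNReal.ofReal (bubbleWeight γ s * bubbleWeight γ s' *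
        (y ^ (2 * m - 1 - 4 * γ) * (poissonWeight γ y t * poissonWeight γ y t'))) *
        ∫⁻ x : V, ENNReal.ofReal
          (heatKernel (t + s⁻¹) x * heatKernel (t' + s'⁻¹) x * inner ℝ e x ^ (2 * j)) := by
    intro y (hy : 0 < y)
    have hp := poissonWeight_nonneg γ hy.le ht.le
    have hp' := poissonWeight_nonneg γ hy.le ht'.le
    rw [← lintegral_ofReal_const_mul (by positivity)]
    refine lintegral_congr fun x => congrArg _ ?_
    rw [bubbleMode, bubbleMode]
    ring
  rw [Measure.volume_eq_prod, setLIntegral_prod _ (Measurable.aemeasurable (by fun_prop))]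
  simp only [Measure.restrict_univ]
  rw [setLIntegral_congr_fun measurableSet_Ioi hfactor,
    lintegral_heatKernel_mul_heatKernel_mul_inner_pow he (by positivity) (by positivity),
    lintegral_mul_const' _ _ ENNReal.ofReal_ne_top, lintegral_ofReal_const_mul hb,
    setLIntegral_rpow_mul_poissonWeight_mul_poissonWeight hm ht ht',
    ← ENNReal.ofReal_mul hb, ← ENNReal.ofReal_mul (by positivity), momentConst, modeInteraction]
  ring_nf

theorem lintegral_weight_mul_bubbleExtension_sq {γ m : ℝ} (hγ : 0 < γ)
    (hd : 2 * γ < finrank ℝ V) (hm : 0 < m) {e : V} (he : ‖e‖ = 1) (j : ℕ) :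
    ∫⁻ z : ℝ × V in Ioi 0 ×ˢ univ, ENNReal.ofReal (z.1 ^ (2 * m - 1 - 4 * γ) *
        inner ℝ e z.2 ^ (2 * j) * bubbleExtension γ z.2 z.1 ^ 2) =
      ENNReal.ofReal
          (subordinationConst γ (finrank ℝ V) ^ 2 * momentConst (finrank ℝ V / 2) m j) *
        ∫⁻ s in Ioi 0, ∫⁻ s' in Ioi 0, ∫⁻ t in Ioi 0, ∫⁻ t' in Ioi 0,
          ENNReal.ofReal (modeInteraction γ (finrank ℝ V / 2) m j s s' t t') := by
  set C := subordinationConst γ (finrank ℝ V)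
  have hC : 0 < C := subordinationConst_pos hγ hd
  have hK : 0 < momentConst (finrank ℝ V / 2) m j := momentConst_pos hm j
  have hweight (z : ℝ × V) (hz : 0 < z.1) :
      0 ≤ z.1 ^ (2 * m - 1 - 4 * γ) * inner ℝ e z.2 ^ (2 * j) :=
    mul_nonneg (rpow_nonneg hz.le _) ((even_two_mul j).pow_nonneg _)
  let W : ℝ × V → ℝ≥0∞ := fun z =>
    ENNReal.ofReal (z.1 ^ (2 * m - 1 - 4 * γ) * inner ℝ e z.2 ^ (2 * j))
  have hsq : ∀ z ∈ Ioi (0 : ℝ) ×ˢ (univ : Set V), ENNReal.ofReal (z.1 ^ (2 * m - 1 - 4 * γ) *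
      inner ℝ e z.2 ^ (2 * j) * bubbleExtension γ z.2 z.1 ^ 2) =
      ENNReal.ofReal (C ^ 2) * (W z *
        (∫⁻ s in Ioi 0, ∫⁻ t in Ioi 0, ENNReal.ofReal (bubbleMode γ s t z.2 z.1)) ^ 2) := by
    rintro z ⟨hz : 0 < z.1, -⟩
    rw [ENNReal.ofReal_mul (hweight z hz), ENNReal.ofReal_pow (bubbleExtension_nonneg γ _ hz.le),
      ofReal_bubbleExtension hγ hd _ hz, ENNReal.ofReal_pow hC.le, mul_pow, mul_left_comm]
  rw [setLIntegral_congr_fun (measurableSet_Ioi.prod .univ) hsq,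
    lintegral_const_mul' _ _ ENNReal.ofReal_ne_top,
    lintegral_mul_sq_lintegral_lintegral (by fun_prop) (by fun_prop),
    ENNReal.ofReal_mul (by positivity), mul_assoc]
  congr 1
  simp only [← lintegral_const_mul' _ _ ENNReal.ofReal_ne_top]
  refine setLIntegral_congr_fun measurableSet_Ioi fun s hs =>
    setLIntegral_congr_fun measurableSet_Ioi fun s' hs' =>
    setLIntegral_congr_fun measurableSet_Ioi fun t ht =>
    setLIntegral_congr_fun measurableSet_Ioi fun t' ht' => ?_
  rw [← ENNReal.ofReal_mul hK.le,
    ← lintegral_weight_mul_bubbleMode_mul_bubbleMode hm he j hs hs' ht ht']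
  refine setLIntegral_congr_fun (measurableSet_Ioi.prod .univ) fun z ⟨(hz : 0 < z.1), _⟩ => ?_
  rw [← ENNReal.ofReal_mul (bubbleMode_nonneg γ hs.le ht.le z.2 hz.le),
    ← ENNReal.ofReal_mul (hweight z hz)]

theorem integral_weight_mul_bubbleExtension_sq {γ m v : ℝ} (hγ : 0 < γ)
    (hd : 2 * γ < finrank ℝ V) (hm : 0 < m) {e : V} (he : ‖e‖ = 1) (j : ℕ) (hv : 0 ≤ v)
    (h : ∫⁻ s in Ioi 0, ∫⁻ s' in Ioi 0, ∫⁻ t in Ioi 0, ∫⁻ t' in Ioi 0,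
      ENNReal.ofReal (modeInteraction γ (finrank ℝ V / 2) m j s s' t t') = ENNReal.ofReal v) :
    ∫ y in Ioi (0 : ℝ), ∫ x : V,
        y ^ (2 * m - 1 - 4 * γ) * inner ℝ e x ^ (2 * j) * bubbleExtension γ x y ^ 2 =
      subordinationConst γ (finrank ℝ V) ^ 2 * momentConst (finrank ℝ V / 2) m j * v := by
  have hK := momentConst_pos (M := finrank ℝ V / 2) hm j
  have hU := measurable_bubbleExtension (V := V) γ
  refine setIntegral_integral_eq_of_setLIntegral_prod_univ measurableSet_Ioi ?_
    (fun y (hy : 0 < y) x => ?_) (by positivity) ?_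
  · exact Measurable.mul (by fun_prop) (hU.pow_const 2)
  · have heven := (even_two_mul j).pow_nonneg (inner ℝ e x)
    positivity
  · rw [ENNReal.ofReal_mul (by positivity), ← h]
    exact lintegral_weight_mul_bubbleExtension_sq hγ hd hm he j

end WeightedNorm

section ModeInteraction

theorem setLIntegral_bubbleWeight_mul_bubbleWeight {γ p q : ℝ} (i : ℕ) (hp : 0 < p)
    (hq : q < 2 * p) (hi : p = q - γ - i) :
    ∫⁻ s in Ioi 0, ∫⁻ s' in Ioi 0, ENNReal.ofReal
        (bubbleWeight γ s * bubbleWeight γ s' * ((s⁻¹ * s'⁻¹) ^ i * (s⁻¹ + s'⁻¹) ^ (-q))) =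
      ENNReal.ofReal (beta p p * Gamma (2 * p - q)) := by
  rw [sub_eq_add_neg, ← setLIntegral_mul_rpow_mul_add_rpow_mul_exp_neg hp (by linarith)]
  refine setLIntegral_congr_fun measurableSet_Ioi fun s (hs : 0 < s) =>
    setLIntegral_congr_fun measurableSet_Ioi fun s' (hs' : 0 < s') => congrArg _ ?_
  have hss' : 0 < s * s' := mul_pos hs hs'
  have hsum : s⁻¹ + s'⁻¹ = (s + s') * (s * s')⁻¹ := by
    field_simp
    ring
  rw [bubbleWeight, bubbleWeight, hsum, mul_rpow (by positivity) (by positivity), ← mul_inv,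
    ← rpow_natCast, inv_rpow hss'.le, inv_rpow hss'.le, ← rpow_neg hss'.le, ← rpow_neg hss'.le,
    neg_neg, neg_add, exp_add, show p - 1 = -γ - 1 + -(i : ℝ) + q by rw [hi]; ring, rpow_add hss',
    rpow_add hss', mul_rpow hs.le hs'.le (z := -γ - 1)]
  ring

theorem modeInteraction_two_add_zero (γ M s s' t t' : ℝ) :
    modeInteraction γ M (2 + γ) 0 s s' t t' = t * t' * (bubbleWeight γ s * bubbleWeight γ s' *
      ((t + t') ^ (-(2 + γ)) * (s⁻¹ + s'⁻¹ + (t + t')) ^ (-M))) := by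
  rw [modeInteraction, show 2 + γ - γ - 1 = 1 by ring, rpow_one, Nat.cast_zero, add_zero, pow_zero,
    add_add_add_comm, add_comm (t + t')]
  ring

theorem modeInteraction_one_add_one (γ M s s' t t' : ℝ) :
    modeInteraction γ M (1 + γ) 1 s s' t t' = (s⁻¹ + t) * (s'⁻¹ + t') *
      (bubbleWeight γ s * bubbleWeight γ s' *
        ((t + t') ^ (-(1 + γ)) * (s⁻¹ + s'⁻¹ + (t + t')) ^ (-(M + 1)))) := by
  rw [modeInteraction, show 1 + γ - γ - 1 = 0 by ring, rpow_zero, Nat.cast_one, pow_one,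
    add_add_add_comm, add_comm (t + t')]
  ring

theorem setLIntegral_modeInteraction_zero {γ M s s' : ℝ} (hγ : γ < 2) (hM : 2 - γ < M)
    (hs : 0 < s) (hs' : 0 < s') :
    ∫⁻ t in Ioi 0, ∫⁻ t' in Ioi 0, ENNReal.ofReal (modeInteraction γ M (2 + γ) 0 s s' t t') =
      ENNReal.ofReal (beta (2 - γ) (M - 2 + γ) / 6) *
        ENNReal.ofReal (bubbleWeight γ s * bubbleWeight γ s' *
          ((s⁻¹ * s'⁻¹) ^ 0 * (s⁻¹ + s'⁻¹) ^ (-(M - 2 + γ)))) := by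
  have hβ : 0 < beta (2 - γ) (M - 2 + γ) := beta_pos (by linarith) (by linarith)
  set c := bubbleWeight γ s * bubbleWeight γ s'
  have hc : 0 ≤ c := mul_nonneg (bubbleWeight_nonneg γ hs.le) (bubbleWeight_nonneg γ hs'.le)
  set S := s⁻¹ + s'⁻¹
  have hS₀ : 0 < S := by positivity
  have hquadrant := setLIntegral_add_mul_add_mul_comp_add le_rfl le_rfl
    (g := fun T => c * (T ^ (-(2 + γ)) * (S + T) ^ (-M))) (by fun_prop)
    fun T hT => by positivity
  rw [setLIntegral_pow_mul_const_mul_rpow_neg_mul_add_rpow_neg (p := 2 - γ) (q := M - 2 + γ) 3 hc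
    (by linarith) (by linarith) hS₀ (by push_cast; ring) (by ring)] at hquadrant
  simp only [mul_zero, add_zero, zero_div, ENNReal.ofReal_zero, zero_mul, zero_add] at hquadrant
  simp_rw [modeInteraction_two_add_zero]
  rw [hquadrant, pow_zero, one_mul, ← ENNReal.ofReal_mul (by positivity),
    ← ENNReal.ofReal_mul (by positivity)]
  ring_nf

theorem setLIntegral_modeInteraction_one {γ M s s' : ℝ} (hγ : γ < 1) (hM : 2 - γ < M)
    (hs : 0 < s) (hs' : 0 < s') :
    ∫⁻ t in Ioi 0, ∫⁻ t' in Ioi 0, ENNReal.ofReal (modeInteraction γ M (1 + γ) 1 s s' t t') =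
      ENNReal.ofReal (beta (1 - γ) (M + γ)) * ENNReal.ofReal (bubbleWeight γ s *
        bubbleWeight γ s' * ((s⁻¹ * s'⁻¹) ^ 1 * (s⁻¹ + s'⁻¹) ^ (-(M + γ)))) +
      ENNReal.ofReal (beta (2 - γ) (M - 1 + γ) / 2 + beta (3 - γ) (M - 2 + γ) / 6) *
        ENNReal.ofReal (bubbleWeight γ s * bubbleWeight γ s' *
          ((s⁻¹ * s'⁻¹) ^ 0 * (s⁻¹ + s'⁻¹) ^ (-(M - 2 + γ)))) := by
  have hβ₁ : 0 < beta (1 - γ) (M + γ) := beta_pos (by linarith) (by linarith)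
  have hβ₂ : 0 < beta (2 - γ) (M - 1 + γ) := beta_pos (by linarith) (by linarith)
  have hβ₃ : 0 < beta (3 - γ) (M - 2 + γ) := beta_pos (by linarith) (by linarith)
  set c := bubbleWeight γ s * bubbleWeight γ s'
  have hc : 0 ≤ c := mul_nonneg (bubbleWeight_nonneg γ hs.le) (bubbleWeight_nonneg γ hs'.le)
  set S := s⁻¹ + s'⁻¹ with hS
  have hS₀ : 0 < S := by positivity
  have hSpow : S ^ (-(M - 2 + γ)) = S * S ^ (-(M - 1 + γ)) := by
    rw [← rpow_one_add' hS₀.le (by linarith)]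
    ring_nf
  have hmoment := setLIntegral_pow_mul_const_mul_rpow_neg_mul_add_rpow_neg (p := 1 - γ)
    (q := M + γ) (r := 1 + γ) (k := M + 1) 1 hc (by linarith) (by linarith) hS₀
    (by push_cast; ring) (by ring)
  simp only [pow_one] at hmoment
  simp_rw [modeInteraction_one_add_one]
  rw [setLIntegral_add_mul_add_mul_comp_add (by positivity) (by positivity)
      (g := fun T => c * (T ^ (-(1 + γ)) * (S + T) ^ (-(M + 1)))) (by fun_prop)
      (fun T hT => by positivity), hmoment,
    setLIntegral_pow_mul_const_mul_rpow_neg_mul_add_rpow_neg (p := 2 - γ) (q := M - 1 + γ) 2 hc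
      (by linarith) (by linarith) hS₀ (by push_cast; ring) (by ring),
    setLIntegral_pow_mul_const_mul_rpow_neg_mul_add_rpow_neg (p := 3 - γ) (q := M - 2 + γ) 3 hc
      (by linarith) (by linarith) hS₀ (by push_cast; ring) (by ring), add_assoc]
  simp only [← hS, pow_one, pow_zero, one_mul, hSpow]
  rw [← ENNReal.ofReal_mul (by positivity), ← ENNReal.ofReal_mul (by positivity),
    ← ENNReal.ofReal_mul (by positivity), ← ENNReal.ofReal_mul (by positivity),
    ← ENNReal.ofReal_mul (by positivity), ← ENNReal.ofReal_add (by positivity) (by positivity)]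
  ring_nf

theorem setLIntegral_setLIntegral_modeInteraction_one {γ M : ℝ} (hγ₀ : 0 < γ) (hγ : γ < 1)
    (hM : 2 + γ < M) :
    ∫⁻ s in Ioi 0, ∫⁻ s' in Ioi 0, ∫⁻ t in Ioi 0, ∫⁻ t' in Ioi 0,
        ENNReal.ofReal (modeInteraction γ M (1 + γ) 1 s s' t t') =
      ENNReal.ofReal ((beta (1 - γ) (M + γ) * beta (M - 1) (M - 1) +
        (beta (2 - γ) (M - 1 + γ) / 2 + beta (3 - γ) (M - 2 + γ) / 6) *
          beta (M - 2) (M - 2)) * Gamma (M - 2 - γ)) := by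
  have hΓ : 0 < Gamma (M - 2 - γ) := Gamma_pos_of_pos (by linarith)
  have hβ₁ : 0 < beta (1 - γ) (M + γ) := beta_pos (by linarith) (by linarith)
  have hβ₂ : 0 < beta (2 - γ) (M - 1 + γ) := beta_pos (by linarith) (by linarith)
  have hβ₃ : 0 < beta (3 - γ) (M - 2 + γ) := beta_pos (by linarith) (by linarith)
  have hβM₁ : 0 < beta (M - 1) (M - 1) := beta_pos (by linarith) (by linarith)
  have hβM₂ : 0 < beta (M - 2) (M - 2) := beta_pos (by linarith) (by linarith)
  rw [setLIntegral_congr_fun measurableSet_Ioi fun s hs =>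
    setLIntegral_congr_fun measurableSet_Ioi fun s' hs' =>
      setLIntegral_modeInteraction_one hγ (by linarith) hs hs']
  have hmeas : Measurable fun p : ℝ × ℝ => ENNReal.ofReal (bubbleWeight γ p.1 *
      bubbleWeight γ p.2 * ((p.1⁻¹ * p.2⁻¹) ^ 1 * (p.1⁻¹ + p.2⁻¹) ^ (-(M + γ)))) := by
    unfold bubbleWeight
    fun_prop
  have hmeas_right (s : ℝ) := (hmeas.comp (measurable_prodMk_left (x := s))).const_mul
    (ENNReal.ofReal (beta (1 - γ) (M + γ)))
  simp only [Function.comp_def] at hmeas_right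
  simp_rw [lintegral_add_left (hmeas_right _), lintegral_const_mul' _ _ ENNReal.ofReal_ne_top]
  rw [lintegral_add_left (hmeas.lintegral_prod_right'.const_mul _),
    lintegral_const_mul' _ _ ENNReal.ofReal_ne_top, lintegral_const_mul' _ _ ENNReal.ofReal_ne_top,
    setLIntegral_bubbleWeight_mul_bubbleWeight (p := M - 1) 1 (by linarith) (by linarith)
      (by push_cast; ring),
    setLIntegral_bubbleWeight_mul_bubbleWeight (p := M - 2) 0 (by linarith) (by linarith)
      (by push_cast; ring), ← ENNReal.ofReal_mul hβ₁.le, ← ENNReal.ofReal_mul (by positivity),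
    show 2 * (M - 1) - (M + γ) = M - 2 - γ by ring,
    show 2 * (M - 2) - (M - 2 + γ) = M - 2 - γ by ring,
    ← ENNReal.ofReal_add (by positivity) (by positivity), ← mul_assoc, ← mul_assoc, ← add_mul]

theorem setLIntegral_setLIntegral_modeInteraction_zero {γ M : ℝ} (hγ₀ : 0 < γ) (hγ : γ < 2)
    (hM : 2 + γ < M) :
    ∫⁻ s in Ioi 0, ∫⁻ s' in Ioi 0, ∫⁻ t in Ioi 0, ∫⁻ t' in Ioi 0,
        ENNReal.ofReal (modeInteraction γ M (2 + γ) 0 s s' t t') =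
      ENNReal.ofReal
        (beta (2 - γ) (M - 2 + γ) / 6 * beta (M - 2) (M - 2) * Gamma (M - 2 - γ)) := by
  have hβ : 0 < beta (2 - γ) (M - 2 + γ) := beta_pos (by linarith) (by linarith)
  rw [setLIntegral_congr_fun measurableSet_Ioi fun s hs =>
    setLIntegral_congr_fun measurableSet_Ioi fun s' hs' =>
      setLIntegral_modeInteraction_zero hγ (by linarith) hs hs']
  simp_rw [lintegral_const_mul' _ _ ENNReal.ofReal_ne_top]
  rw [setLIntegral_bubbleWeight_mul_bubbleWeight (p := M - 2) 0 (by linarith) (by linarith)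
    (by push_cast; ring), ← ENNReal.ofReal_mul (by positivity),
    show 2 * (M - 2) - (M - 2 + γ) = M - 2 - γ by ring, ← mul_assoc]

end ModeInteraction

section Ratio

theorem momentConst_add_one (M : ℝ) {m : ℝ} (hm : m ≠ 0) :
    momentConst M (m + 1) 0 = 2 * m * momentConst M m 1 := by
  rw [momentConst, momentConst, Gamma_add_one hm, Nat.cast_zero, zero_add, Nat.cast_one,
    add_comm (1 : ℝ), Gamma_add_one one_half_pos.ne']
  ring

theorem beta_mul_beta_add_add_mul_beta {γ M : ℝ} (hγ₀ : 0 < γ) (hγ : γ < 1) (hM : 2 + γ < M) :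
    beta (1 - γ) (M + γ) * beta (M - 1) (M - 1) +
        (beta (2 - γ) (M - 1 + γ) / 2 + beta (3 - γ) (M - 2 + γ) / 6) * beta (M - 2) (M - 2) =
      (3 * M ^ 2 - 9 * M + 7 - γ ^ 2) / ((2 * M - 3) * (1 - γ)) *
        (beta (2 - γ) (M - 2 + γ) / 6 * beta (M - 2) (M - 2)) := by
  have hβ₁ : beta (1 - γ) (M + γ) =
      (M - 1 + γ) / M * ((M - 2 + γ) / (M - 1) * beta (1 - γ) (M - 2 + γ)) := by
    rw [show M + γ = M - 1 + γ + 1 by ring, beta_add_one_right (by linarith) (by linarith),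
      show M - 1 + γ = M - 2 + γ + 1 by ring, beta_add_one_right (by linarith) (by linarith)]
    ring_nf
  have hβ₂ : beta (2 - γ) (M - 1 + γ) =
      (M - 2 + γ) / M * ((1 - γ) / (M - 1) * beta (1 - γ) (M - 2 + γ)) := by
    rw [show M - 1 + γ = M - 2 + γ + 1 by ring, beta_add_one_right (by linarith) (by linarith),
      show 2 - γ = 1 - γ + 1 by ring, beta_add_one_left (by linarith) (by linarith)]
    ring_nf
  have hβ₃ : beta (3 - γ) (M - 2 + γ) =
      (2 - γ) / M * ((1 - γ) / (M - 1) * beta (1 - γ) (M - 2 + γ)) := by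
    rw [show 3 - γ = 2 - γ + 1 by ring, beta_add_one_left (by linarith) (by linarith),
      show 2 - γ = 1 - γ + 1 by ring, beta_add_one_left (by linarith) (by linarith)]
    ring_nf
  have hβ₄ : beta (2 - γ) (M - 2 + γ) = (1 - γ) / (M - 1) * beta (1 - γ) (M - 2 + γ) := by
    rw [show 2 - γ = 1 - γ + 1 by ring, beta_add_one_left (by linarith) (by linarith)]
    ring_nf
  have hβ₅ : beta (M - 1) (M - 1) =
      (M - 2) / (2 * M - 3) * (1 / 2 * beta (M - 2) (M - 2)) := by
    rw [show M - 1 = M - 2 + 1 by ring, beta_add_one_left (by linarith) (by linarith),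
      beta_add_one_right (by linarith) (by linarith), ← two_mul (M - 2),
      div_mul_cancel_right₀ (by linarith)]
    ring_nf
  rw [hβ₁, hβ₂, hβ₃, hβ₄, hβ₅]
  have hM₀ : M ≠ 0 := by linarith
  have hM₃ : 2 * M - 3 ≠ 0 := by linarith
  have hγ₁ : 1 - γ ≠ 0 := by linarith
  generalize hD : 2 * M - 3 = D at hM₃ ⊢
  field_simp
  rw [← hD]
  ring

variable {V : Type*} [NormedAddCommGroup V] [InnerProductSpace ℝ V] [FiniteDimensional ℝ V]
  [MeasurableSpace V] [BorelSpace V]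

theorem integral_rpow_mul_inner_sq_mul_bubbleExtension_sq {γ : ℝ} (hγ₀ : 0 < γ) (hγ : γ < 1)
    (hd : 4 + 2 * γ < finrank ℝ V) {e : V} (he : ‖e‖ = 1) :
    ∫ y in Ioi (0 : ℝ), ∫ x : V,
        y ^ (1 - 2 * γ) * inner ℝ e x ^ 2 * bubbleExtension γ x y ^ 2 =
      subordinationConst γ (finrank ℝ V) ^ 2 * momentConst (finrank ℝ V / 2) (1 + γ) 1 *
        ((beta (1 - γ) (finrank ℝ V / 2 + γ) * beta (finrank ℝ V / 2 - 1) (finrank ℝ V / 2 - 1) +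
          (beta (2 - γ) (finrank ℝ V / 2 - 1 + γ) / 2 +
            beta (3 - γ) (finrank ℝ V / 2 - 2 + γ) / 6) *
              beta (finrank ℝ V / 2 - 2) (finrank ℝ V / 2 - 2)) *
          Gamma (finrank ℝ V / 2 - 2 - γ)) := by
  have hΓ : 0 < Gamma (finrank ℝ V / 2 - 2 - γ) := Gamma_pos_of_pos (by linarith)
  have hβ₁ : 0 < beta (1 - γ) (finrank ℝ V / 2 + γ) := beta_pos (by linarith) (by linarith)
  have hβ₂ : 0 < beta (2 - γ) (finrank ℝ V / 2 - 1 + γ) := beta_pos (by linarith) (by linarith)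
  have hβ₃ : 0 < beta (3 - γ) (finrank ℝ V / 2 - 2 + γ) := beta_pos (by linarith) (by linarith)
  have hβ₄ : 0 < beta (finrank ℝ V / 2 - 1 : ℝ) (finrank ℝ V / 2 - 1) :=
    beta_pos (by linarith) (by linarith)
  have hβ₅ : 0 < beta (finrank ℝ V / 2 - 2 : ℝ) (finrank ℝ V / 2 - 2) :=
    beta_pos (by linarith) (by linarith)
  rw [← integral_weight_mul_bubbleExtension_sq hγ₀ (by linarith) (by linarith) he 1 (by positivity)
    (setLIntegral_setLIntegral_modeInteraction_one hγ₀ hγ (by linarith)),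
    show 2 * (1 + γ) - 1 - 4 * γ = 1 - 2 * γ by ring, mul_one]

theorem integral_rpow_mul_bubbleExtension_sq {γ : ℝ} (hγ₀ : 0 < γ) (hγ : γ < 2)
    (hd : 4 + 2 * γ < finrank ℝ V) :
    ∫ y in Ioi (0 : ℝ), ∫ x : V, y ^ (3 - 2 * γ) * bubbleExtension γ x y ^ 2 =
      subordinationConst γ (finrank ℝ V) ^ 2 * momentConst (finrank ℝ V / 2) (2 + γ) 0 *
        (beta (2 - γ) (finrank ℝ V / 2 - 2 + γ) / 6 *
          beta (finrank ℝ V / 2 - 2) (finrank ℝ V / 2 - 2) * Gamma (finrank ℝ V / 2 - 2 - γ)) := by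
  have hΓ : 0 < Gamma (finrank ℝ V / 2 - 2 - γ) := Gamma_pos_of_pos (by linarith)
  have hβ₁ : 0 < beta (2 - γ) (finrank ℝ V / 2 - 2 + γ) := beta_pos (by linarith) (by linarith)
  have hβ₂ : 0 < beta (finrank ℝ V / 2 - 2 : ℝ) (finrank ℝ V / 2 - 2) :=
    beta_pos (by linarith) (by linarith)
  have : Nontrivial V := Module.nontrivial_of_finrank_pos (R := ℝ)
    (by exact_mod_cast show (0 : ℝ) < finrank ℝ V by linarith)
  obtain ⟨e, he⟩ := exists_norm_eq V zero_le_one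
  rw [← integral_weight_mul_bubbleExtension_sq hγ₀ (by linarith) (by linarith) he 0 (by positivity)
    (setLIntegral_setLIntegral_modeInteraction_zero hγ₀ hγ (by linarith)),
    show 2 * (2 + γ) - 1 - 4 * γ = 3 - 2 * γ by ring]
  simp only [mul_zero, pow_zero, mul_one]

end Ratio

end CaffarelliSilvestre

open CaffarelliSilvestre Module in
theorem stmt_15_general {V : Type*} [NormedAddCommGroup V] [InnerProductSpace ℝ V]
    [FiniteDimensional ℝ V] [MeasurableSpace V] [BorelSpace V] (γ : ℝ) (hγ : γ ∈ Set.Ioo (0 : ℝ) 1)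
    (a : ℝ) (ha : a = 1 - 2 * γ) (hn : 4 + 2 * γ < (finrank ℝ V : ℝ)) (e : V) (he : ‖e‖ = 1)
    (w : V → ℝ) (hw : ∀ x, w x = (1 + ‖x‖ ^ 2) ^ (-(((finrank ℝ V : ℝ) - 2 * γ) / 2)))
    (U : V → ℝ → ℝ)
    (hU : ∀ x y, U x y = ∫ ξ, y ^ (2 * γ) *
      (‖x - ξ‖ ^ 2 + y ^ 2) ^ (-(((finrank ℝ V : ℝ) + 2 * γ) / 2)) * w ξ) :
    ∫ y in Set.Ioi (0 : ℝ), ∫ x, y ^ a * inner ℝ e x ^ 2 * U x y ^ 2 =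
      (3 * (finrank ℝ V : ℝ) ^ 2 - 18 * finrank ℝ V - (a ^ 2 - 2 * a - 27)) /
          (2 * ((finrank ℝ V : ℝ) - 3) * (3 - a) * (a + 1)) *
        ∫ y in Set.Ioi (0 : ℝ), ∫ x, y ^ (a + 2) * U x y ^ 2 := by
  obtain ⟨hγ₀, hγ₁⟩ := hγ
  obtain rfl : w = bubble γ := funext hw
  obtain rfl : U = bubbleExtension γ := funext₂ hU
  have hmoment : momentConst (finrank ℝ V / 2) (2 + γ) 0 =
      2 * (1 + γ) * momentConst (finrank ℝ V / 2) (1 + γ) 1 := by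
    rw [← momentConst_add_one _ (by linarith)]
    ring_nf
  rw [ha, show 1 - 2 * γ + 2 = 3 - 2 * γ by ring,
    integral_rpow_mul_inner_sq_mul_bubbleExtension_sq hγ₀ hγ₁ hn he,
    integral_rpow_mul_bubbleExtension_sq hγ₀ (by linarith) hn,
    beta_mul_beta_add_add_mul_beta hγ₀ hγ₁ (by linarith), hmoment]
  rw [show 2 * ((finrank ℝ V : ℝ) / 2) - 3 = finrank ℝ V - 3 by ring,
    show 3 - (1 - 2 * γ) = 2 * (1 + γ) by ring, show 1 - 2 * γ + 1 = 2 * (1 - γ) by ring]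
  field_simp
  ring

open MeasureTheory Real in
theorem stmt_15 (γ : ℝ) (hγ : γ ∈ Set.Ioo (0:ℝ) 1) (a : ℝ) (ha : a = 1 - 2*γ)
    (n : ℕ) (hn : 4 + 2*γ < (n:ℝ))
    (w : EuclideanSpace ℝ (Fin n) → ℝ)
    (hw : ∀ x : EuclideanSpace ℝ (Fin n), w x = (1 + ‖x‖^2) ^ (-(((n:ℝ) - 2*γ)/2)))
    (U : EuclideanSpace ℝ (Fin n) → ℝ → ℝ)
    (hU : ∀ x : EuclideanSpace ℝ (Fin n), ∀ y : ℝ,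
      U x y = ∫ ξ : EuclideanSpace ℝ (Fin n),
        y ^ (2*γ) * (‖x - ξ‖^2 + y^2) ^ (-(((n:ℝ) + 2*γ)/2)) * w ξ) :
    ∫ y in Set.Ioi (0:ℝ), ∫ x : EuclideanSpace ℝ (Fin n),
      y ^ a * (x ⟨0, by exact_mod_cast show (0:ℝ) < (n:ℝ) by linarith [hγ.1]⟩)^2 * (U x y)^2 =
    ((3*(n:ℝ)^2 - 18*(n:ℝ) - (a^2 - 2*a - 27)) / (2*((n:ℝ)-3)*(3-a)*(a+1))) *
      ∫ y in Set.Ioi (0:ℝ), ∫ x : EuclideanSpace ℝ (Fin n), y ^ (a+2) * (U x y)^2 := by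
  have hn₀ : 0 < n := by exact_mod_cast show (0 : ℝ) < n by linarith [hγ.1]
  simpa [EuclideanSpace.inner_single_left] using
    stmt_15_general γ hγ a ha (by simpa using hn) (EuclideanSpace.single (⟨0, hn₀⟩ : Fin n) (1 : ℝ))
      (by simp) w (by simpa using hw) U (by simpa using hU)
end
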